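/- arXiv:2010.00277 — 6 statements merged into one kernel-verified Lean document; each statement's English description precedes it below -/
import Mathlib

section
/- Let n ≥ 1, let L be a regular linear subspace of Sⁿ, and let U ∈ L be invertible. Then the following are equivalent: (a) the reciprocal variety L⁻¹ is a linear subspace of Sⁿ; (b) L is closed under the Jordan product •_U (i.e., X •_U Y ∈ L for all X, Y ∈ L); (c) L⁻¹ = U⁻¹ L U⁻¹ := {U⁻¹ A U⁻¹ : A ∈ L}. -/
open Matrix

noncomputable section

abbrev Mat (n : ℕ) := Matrix (Fin n) (Fin n) ℂ

/-- The Jordan product on symmetric matrices with unit `U`. -/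
def jmul {n : ℕ} (U X Y : Mat n) : Mat n :=
  (1 / 2 : ℂ) • (X * U⁻¹ * Y + Y * U⁻¹ * X)

/-- The reciprocal variety of a linear subspace `L` of matrices: the closure of the
set of inverses of invertible elements of `L`. -/
def recipVar {n : ℕ} (L : Submodule ℂ (Mat n)) : Set (Mat n) :=
  closure {Y : Mat n | ∃ X ∈ L, IsUnit (Matrix.det X) ∧ Y = X⁻¹}

/-!
If `L⁻¹` is a linear space `M`, then inversion maps the units of `M` into `L`. Its derivative at
`v⁻¹` is `y ↦ -v * y * v`, so `v * M * v ⊆ L` for each unit `v` of `L`. As `U⁻¹ ∈ M`, this gives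
`v * U⁻¹ * v ∈ L`; units are dense in `L`, so `x * U⁻¹ * x ∈ L` for all `x ∈ L`, and polarization
turns these squares into Jordan products.

Conversely, if `L` is closed under the Jordan product then `U⁻¹ * L` contains all powers of its
elements, hence also the inverses of its units, since these are polynomials in the units. Thus
`v ↦ U * v⁻¹ * U` permutes the units of `L`, so `L⁻¹` and `U⁻¹ * L * U⁻¹` have a common dense
subset.
-/

open Filter Topology

section Algebraic

variable {𝕜 A : Type*} [Field 𝕜] [Ring A] [Algebra 𝕜 A]

lemma finite_spectrum_of_finiteDimensional [FiniteDimensional 𝕜 A] (a : A) :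
    (spectrum 𝕜 a).Finite := by
  refine (Module.End.finite_spectrum (Algebra.lmul 𝕜 A a)).subset fun r hr => ?_
  rwa [spectrum.mem_iff, ← (Algebra.lmul 𝕜 A).commutes r, ← map_sub, Algebra.lmul_isUnit_iff]

lemma inv_mem_adjoin_singleton_of_isIntegral {v : Aˣ} (hv : IsIntegral 𝕜 (v : A)) :
    (↑v⁻¹ : A) ∈ Algebra.adjoin 𝕜 {(v : A)} := by
  let B := Algebra.adjoin 𝕜 {(v : A)}
  let b : B := ⟨v, Algebra.self_mem_adjoin_singleton 𝕜 (v : A)⟩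
  have : Module.Finite 𝕜 B := Algebra.finite_adjoin_simple_of_isIntegral hv
  have : IsArtinianRing B := isArtinian_of_tower 𝕜 inferInstance
  have hb : b ∈ nonZeroDivisors B :=
    comap_nonZeroDivisors_le_of_injective (f := B.subtype) Subtype.val_injective
      v.isUnit.mem_nonZeroDivisors
  obtain ⟨c, hbc⟩ := (IsArtinianRing.isUnit_of_mem_nonZeroDivisors hb).exists_right_inv
  have hvc : (v : A) * c = 1 := congrArg Subtype.val hbc
  rw [Units.inv_eq_of_mul_eq_one_right hvc]
  exact c.2

variable (𝕜) in
/-- The Jordan product `x •ᵤ y` with unit element `u`, over a field `𝕜` in which `2` is invertible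
(in characteristic two it is the junk value `0`). -/
def jordanProduct (u : Aˣ) (x y : A) : A :=
  (1 / 2 : 𝕜) • (x * ↑u⁻¹ * y + y * ↑u⁻¹ * x)

lemma jordanProduct_eq_mul_of_comm [NeZero (2 : 𝕜)] {u : Aˣ} {x y : A}
    (h : x * ↑u⁻¹ * y = y * ↑u⁻¹ * x) : jordanProduct 𝕜 u x y = x * ↑u⁻¹ * y := by
  rw [jordanProduct, ← h, ← two_smul 𝕜, smul_smul, one_div_mul_cancel two_ne_zero, one_smul]

lemma jordanProduct_mem_of_mul_inv_mul_self_mem {L : Submodule 𝕜 A} {u : Aˣ}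
    (hsq : ∀ x ∈ L, x * ↑u⁻¹ * x ∈ L) {x y : A} (hx : x ∈ L) (hy : y ∈ L) :
    jordanProduct 𝕜 u x y ∈ L := by
  have polarization : x * ↑u⁻¹ * y + y * ↑u⁻¹ * x =
      (x + y) * ↑u⁻¹ * (x + y) - x * ↑u⁻¹ * x - y * ↑u⁻¹ * y := by
    noncomm_ring
  rw [jordanProduct, polarization]
  exact L.smul_mem _ (L.sub_mem (L.sub_mem (hsq _ (L.add_mem hx hy)) (hsq _ hx)) (hsq _ hy))

variable [NeZero (2 : 𝕜)] {L : Submodule 𝕜 A} {u : Aˣ}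

lemma mul_inv_mul_pow_mem_of_jordanProduct_mem
    (hL : ∀ x ∈ L, ∀ y ∈ L, jordanProduct 𝕜 u x y ∈ L) (hu : (u : A) ∈ L) {x : A} (hx : x ∈ L)
    (k : ℕ) : u * (↑u⁻¹ * x) ^ k ∈ L := by
  induction k with
  | zero => simpa using hu
  | succ k ih =>
    have hleft : x * ↑u⁻¹ * (u * (↑u⁻¹ * x) ^ k) = u * (↑u⁻¹ * x) ^ (k + 1) := by
      simp [pow_succ', mul_assoc]
    have hright : u * (↑u⁻¹ * x) ^ k * ↑u⁻¹ * x = u * (↑u⁻¹ * x) ^ (k + 1) := by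
      simp [pow_succ, mul_assoc]
    rw [← hleft, ← jordanProduct_eq_mul_of_comm (𝕜 := 𝕜) (hleft.trans hright.symm)]
    exact hL x hx _ ih

lemma mul_inv_mul_mem_of_jordanProduct_mem [Algebra.IsIntegral 𝕜 A]
    (hL : ∀ x ∈ L, ∀ y ∈ L, jordanProduct 𝕜 u x y ∈ L) (hu : (u : A) ∈ L) {v : Aˣ}
    (hv : (v : A) ∈ L) : (u * ↑v⁻¹ * u : A) ∈ L := by
  have hadjoin : (Algebra.adjoin 𝕜 {(↑(u⁻¹ * v) : A)}).toSubmodule ≤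
      L.comap (LinearMap.mulLeft 𝕜 (u : A)) := by
    rw [Algebra.adjoin_eq_span, Submodule.span_le]
    intro _ hy
    obtain ⟨k, rfl⟩ := Submonoid.mem_closure_singleton.1 hy
    exact mul_inv_mul_pow_mem_of_jordanProduct_mem hL hu hv k
  have hmem := hadjoin (inv_mem_adjoin_singleton_of_isIntegral (Algebra.IsIntegral.isIntegral _))
  simpa [mul_assoc] using hmem

end Algebraic

lemma coe_map_mulLeftRight {R A : Type*} [CommSemiring R] [Semiring A] [Algebra R A]
    (L : Submodule R A) (a b : A) :
    (L.map (LinearMap.mulLeftRight R (a, b)) : Set A) = {z | ∃ x ∈ L, z = a * x * b} := by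
  ext z
  simp [eq_comm]

section Density

variable {𝕜 A : Type*} [Field 𝕜] [TopologicalSpace 𝕜] [T1Space 𝕜] [Ring A] [Algebra 𝕜 A]
  [FiniteDimensional 𝕜 A]

lemma eventually_isUnit_add_smul (a : A) (u : Aˣ) :
    ∀ᶠ t : 𝕜 in 𝓝[≠] 0, IsUnit (a + t • (u : A)) := by
  have hfin := finite_spectrum_of_finiteDimensional (𝕜 := 𝕜) (-(a * ↑u⁻¹))
  filter_upwards [nhdsNE_le_cofinite 0 hfin.compl_mem_cofinite] with t ht
  have hfactor : a + t • (u : A) = (algebraMap 𝕜 A t - -(a * ↑u⁻¹)) * u := by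
    simp [add_mul, Algebra.smul_def, add_comm]
  rw [hfactor]
  exact (spectrum.notMem_iff.1 ht).mul u.isUnit

lemma subset_closure_setOf_isUnit [(𝓝[≠] (0 : 𝕜)).NeBot] [TopologicalSpace A] [ContinuousAdd A]
    [ContinuousSMul 𝕜 A] {L : Submodule 𝕜 A} {u : Aˣ} (hu : (u : A) ∈ L) :
    (L : Set A) ⊆ closure {x | x ∈ L ∧ IsUnit x} := by
  intro x hx
  have hline : Continuous fun t : 𝕜 => x + t • (u : A) := by fun_prop
  have hlim : Tendsto (fun t : 𝕜 => x + t • (u : A)) (𝓝[≠] 0) (𝓝 x) := by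
    simpa using (hline.tendsto 0).mono_left nhdsWithin_le_nhds
  refine mem_closure_of_tendsto hlim ?_
  filter_upwards [eventually_isUnit_add_smul x u] with t ht
  exact ⟨L.add_mem hx (L.smul_mem t hu), ht⟩

end Density

/-- The reciprocal variety of a set `S` in a topological monoid: the closure of the set of
inverses of the units in `S`. -/
def reciprocalVariety {A : Type*} [Monoid A] [TopologicalSpace A] (S : Set A) : Set A :=
  closure {y | ∃ v : Aˣ, ↑v ∈ S ∧ y = ↑v⁻¹}

lemma inv_mem_reciprocalVariety {A : Type*} [Monoid A] [TopologicalSpace A] {S : Set A} {v : Aˣ}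
    (hv : ↑v ∈ S) : (↑v⁻¹ : A) ∈ reciprocalVariety S :=
  subset_closure ⟨v, hv, rfl⟩

section Normed

variable {𝕜 A : Type*} [NormedRing A]

lemma inv_mem_of_mem_reciprocalVariety [HasSummableGeomSeries A] {S : Set A} (hS : IsClosed S)
    {v : Aˣ} (hv : ↑v ∈ reciprocalVariety S) : (↑v⁻¹ : A) ∈ S := by
  have hmem := mem_closure_image (NormedRing.inverse_continuousAt v) hv
  rw [Ring.inverse_unit] at hmem
  refine closure_minimal ?_ hS hmem
  rintro _ ⟨_, ⟨w, hw, rfl⟩, rfl⟩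
  simpa using hw

variable [NontriviallyNormedField 𝕜] [NormedAlgebra 𝕜 A]

lemma inv_mul_mul_inv_mem_of_inv_mem [HasSummableGeomSeries A] {P Q : Submodule 𝕜 A}
    (hQ : IsClosed (Q : Set A)) (hPQ : ∀ w : Aˣ, ↑w ∈ P → (↑w⁻¹ : A) ∈ Q)
    {v : Aˣ} (hv : ↑v ∈ P) {y : A} (hy : y ∈ P) : (↑v⁻¹ * y * ↑v⁻¹ : A) ∈ Q := by
  have hderiv : HasLineDerivAt 𝕜 Ring.inverse (-(↑v⁻¹ * y * ↑v⁻¹ : A)) v y :=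
    (hasFDerivAt_ringInverse (𝕜 := 𝕜) v).hasLineDerivAt y
  rw [← Q.neg_mem_iff]
  refine hQ.mem_of_tendsto hderiv.tendsto_slope_zero ?_
  have hline : Continuous fun t : 𝕜 => (v : A) + t • y := by fun_prop
  have hunit : ∀ᶠ t : 𝕜 in 𝓝[≠] 0, IsUnit ((v : A) + t • y) :=
    (hline.tendsto' 0 v (by simp)).mono_left nhdsWithin_le_nhds |>.eventually v.nhds
  filter_upwards [hunit] with t ⟨w, hw⟩
  have hwP : (w : A) ∈ P := hw ▸ P.add_mem hv (P.smul_mem t hy)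
  rw [← hw, Ring.inverse_unit, Ring.inverse_unit]
  exact Q.smul_mem _ (Q.sub_mem (hPQ w hwP) (hPQ v hv))

variable [CompleteSpace 𝕜] [FiniteDimensional 𝕜 A] {L : Submodule 𝕜 A} {u : Aˣ}

lemma mul_inv_mul_self_mem_of_reciprocalVariety_eq {M : Submodule 𝕜 A}
    (hM : reciprocalVariety (L : Set A) = M) (hu : ↑u ∈ L) {x : A} (hx : x ∈ L) :
    x * ↑u⁻¹ * x ∈ L := by
  have : CompleteSpace A := FiniteDimensional.complete 𝕜 A
  have hLclosed : IsClosed (L : Set A) := L.closed_of_finiteDimensional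
  have hLM (v : Aˣ) (hv : ↑v ∈ L) : (↑v⁻¹ : A) ∈ M := hM.subset (inv_mem_reciprocalVariety hv)
  have hML (v : Aˣ) (hv : ↑v ∈ M) : (↑v⁻¹ : A) ∈ L :=
    inv_mem_of_mem_reciprocalVariety hLclosed (hM.superset hv)
  have hunits : Set.MapsTo (fun y : A => y * ↑u⁻¹ * y) {y | y ∈ L ∧ IsUnit y} L := by
    rintro _ ⟨hv, v, rfl⟩
    simpa using inv_mul_mul_inv_mem_of_inv_mem hLclosed hML (hLM v hv) (hLM u hu)
  have hcont : Continuous fun y : A => y * ↑u⁻¹ * y := by fun_prop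
  exact hLclosed.closure_subset (hunits.closure hcont (subset_closure_setOf_isUnit hu hx))

lemma reciprocalVariety_eq_of_jordanProduct_mem [NeZero (2 : 𝕜)]
    (hL : ∀ x ∈ L, ∀ y ∈ L, jordanProduct 𝕜 u x y ∈ L) (hu : ↑u ∈ L) :
    reciprocalVariety (L : Set A) = {z | ∃ x ∈ L, z = ↑u⁻¹ * x * ↑u⁻¹} := by
  have hinv (v : Aˣ) (hv : ↑v ∈ L) : ((u * v⁻¹ * u : Aˣ) : A) ∈ L :=
    mul_inv_mul_mem_of_jordanProduct_mem hL hu hv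
  apply Set.Subset.antisymm
  · refine closure_minimal ?_ ?_
    · rintro _ ⟨v, hv, rfl⟩
      exact ⟨_, hinv v hv, by simp [mul_assoc]⟩
    · rw [← coe_map_mulLeftRight]
      exact Submodule.closed_of_finiteDimensional _
  · rintro _ ⟨x, hx, rfl⟩
    have hcont : Continuous fun y : A => ↑u⁻¹ * y * ↑u⁻¹ := by fun_prop
    have hunits : Set.MapsTo (fun y : A => ↑u⁻¹ * y * ↑u⁻¹) {y | y ∈ L ∧ IsUnit y}
        {y | ∃ v : Aˣ, ↑v ∈ (L : Set A) ∧ y = ↑v⁻¹} := by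
      rintro _ ⟨hv, v, rfl⟩
      exact ⟨u * v⁻¹ * u, hinv v hv, by simp [mul_assoc]⟩
    exact hunits.closure hcont (subset_closure_setOf_isUnit hu hx)

variable (L u) in
theorem stmt0_general [NeZero (2 : 𝕜)] (hu : ↑u ∈ L) :
    List.TFAE [∃ M : Submodule 𝕜 A, reciprocalVariety (L : Set A) = M,
      ∀ x ∈ L, ∀ y ∈ L, jordanProduct 𝕜 u x y ∈ L,
      reciprocalVariety (L : Set A) = {z | ∃ x ∈ L, z = ↑u⁻¹ * x * ↑u⁻¹}] := by
  tfae_have 1 → 2 := fun ⟨_, hM⟩ _ hx _ hy =>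
    jordanProduct_mem_of_mul_inv_mul_self_mem
      (fun _ => mul_inv_mul_self_mem_of_reciprocalVariety_eq hM hu) hx hy
  tfae_have 2 → 3 := fun hL => reciprocalVariety_eq_of_jordanProduct_mem hL hu
  tfae_have 3 → 1 := fun h => ⟨_, h.trans (coe_map_mulLeftRight L _ _).symm⟩
  tfae_finish

end Normed

lemma recipVar_eq_reciprocalVariety {n : ℕ} (L : Submodule ℂ (Mat n)) :
    recipVar L = reciprocalVariety (L : Set (Mat n)) := by
  refine congrArg closure (Set.ext fun Y => ⟨?_, ?_⟩)
  · rintro ⟨X, hXL, hX, rfl⟩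
    exact ⟨X.nonsingInvUnit hX, hXL, rfl⟩
  · rintro ⟨V, hVL, rfl⟩
    exact ⟨V, hVL, (Matrix.isUnit_iff_isUnit_det _).1 V.isUnit, Matrix.coe_units_inv V⟩

/-- Theorem 1: for a regular subspace `L` of symmetric matrices and an invertible `U ∈ L`,
(a) the reciprocal variety is a linear space iff (b) `L` is closed under the Jordan
product `•_U`, iff (c) `L⁻¹ = U⁻¹ L U⁻¹`. -/
theorem stmt0 {n : ℕ} (hn : 1 ≤ n) (L : Submodule ℂ (Mat n))
    (hsym : ∀ X ∈ L, Matrix.IsSymm X)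
    (U : Mat n) (hUL : U ∈ L) (hU : IsUnit U.det) :
    ((∃ M : Submodule ℂ (Mat n), recipVar L = (M : Set (Mat n))) ↔
      (∀ X ∈ L, ∀ Y ∈ L, jmul U X Y ∈ L)) ∧
    ((∀ X ∈ L, ∀ Y ∈ L, jmul U X Y ∈ L) ↔
      recipVar L = {Z : Mat n | ∃ A ∈ L, Z = U⁻¹ * A * U⁻¹}) := by
  -- The topology of this norm is definitionally the entrywise one used in `recipVar`.
  open scoped Matrix.Norms.Operator in
  have h := stmt0_general L (U.nonsingInvUnit hU) hUL
  rw [recipVar_eq_reciprocalVariety]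
  exact ⟨h.out 0 1, h.out 1 2⟩
end
end

section
/- Square roots exist in any complex Jordan subalgebra L ⊆ Sⁿ with unit U: for every invertible matrix X ∈ L there exists Y ∈ L with Y •_U Y = X, i.e., Y U⁻¹ Y = X. -/
open Matrix

noncomputable section

/-!
Put `a = x u⁻¹`. Since `(p(a) u) •_u (q(a) u) = (p q)(a) u`, the subspace `L` contains `p(a) u` for
every polynomial `p`, so it suffices to find a square root of the unit `a` in the commutative
algebra `K[a]`. Interpolating square roots at the roots of the minimal polynomial of `a` gives
`b ∈ K[a]` with `b² - a` nilpotent, and Newton iteration corrects `b` to an exact square root,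
because the derivative `2b` is a unit.
-/

section NthRoots

open Polynomial

theorem dvd_pow_natDegree_of_forall_mem_roots {R : Type*} [CommRing R] [IsDomain R] {f g : R[X]}
    (hf : f.Monic) (hsplit : f.Splits) (hg : ∀ r ∈ f.roots, g.IsRoot r) :
    f ∣ g ^ f.natDegree := by
  have hdvd : (f.roots.map (X - C ·)).prod ∣ (f.roots.map fun _ ↦ g).prod :=
    Multiset.prod_dvd_prod_of_dvd _ _ fun r hr ↦ dvd_iff_isRoot.2 (hg r hr)
  rwa [← hsplit.eq_prod_roots_of_monic hf, Multiset.map_const', Multiset.prod_replicate,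
    ← hsplit.natDegree_eq_card_roots] at hdvd

theorem exists_pow_eq_of_isNilpotent_pow_sub {R : Type*} [CommRing R] {n : ℕ}
    (hn : IsUnit (n : R)) {a b : R} (ha : IsUnit a) (hab : IsNilpotent (b ^ n - a)) :
    ∃ c, c ^ n = a := by
  cases subsingleton_or_nontrivial R
  · exact ⟨1, Subsingleton.elim _ _⟩
  have hn0 : n ≠ 0 := by
    rintro rfl
    simp at hn
  have hb : IsUnit b := by
    have hbn : IsUnit (b ^ n) := by
      simpa using hab.isUnit_add_left_of_commute ha (Commute.all _ _)
    exact (isUnit_pow_iff hn0).1 hbn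
  obtain ⟨c, ⟨-, hc⟩, -⟩ := existsUnique_nilpotent_sub_and_aeval_eq_zero
    (P := X ^ n - C a) (x := b) (by simpa using hab)
    (by simpa [derivative_X_pow] using hn.mul (hb.pow (n - 1)))
  exact ⟨c, by simpa [sub_eq_zero] using hc⟩

variable {K : Type*} [Field K] [IsAlgClosed K] {n : ℕ}

theorem exists_isNilpotent_aeval_pow_sub {A : Type*} [Ring A] [Algebra K A] (hn : n ≠ 0) {a : A}
    (ha : IsIntegral K a) : ∃ q : K[X], IsNilpotent (aeval a q ^ n - a) := by
  classical
  choose s hs using fun r : K ↦ IsAlgClosed.exists_pow_nat_eq r hn.pos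
  let f := minpoly K a
  let q := Lagrange.interpolate f.roots.toFinset id s
  have hq : ∀ r ∈ f.roots, (q ^ n - X).IsRoot r := by
    intro r hr
    have hqr : q.eval r = s r :=
      Lagrange.eval_interpolate_at_node (v := id) s (Set.injOn_id _) (Multiset.mem_toFinset.2 hr)
    simp [hqr, hs]
  have hdvd : f ∣ (q ^ n - X) ^ f.natDegree :=
    dvd_pow_natDegree_of_forall_mem_roots (minpoly.monic ha) (IsAlgClosed.splits f) hq
  exact ⟨q, f.natDegree, by simpa using minpoly.dvd_iff.1 hdvd⟩

theorem exists_pow_eq_of_isUnit {B : Type*} [CommRing B] [Algebra K B] [Algebra.IsIntegral K B]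
    (hn : (n : K) ≠ 0) {b : B} (hb : IsUnit b) : ∃ c, c ^ n = b := by
  have hn0 : n ≠ 0 := by
    rintro rfl
    simp at hn
  have hnB : IsUnit (n : B) := by
    simpa using hn.isUnit.map (algebraMap K B)
  obtain ⟨q, hq⟩ := exists_isNilpotent_aeval_pow_sub hn0 (Algebra.IsIntegral.isIntegral (R := K) b)
  exact exists_pow_eq_of_isNilpotent_pow_sub hnB hb hq

theorem exists_aeval_pow_eq {A : Type*} [Ring A] [Algebra K A] (hn : (n : K) ≠ 0) {a : A}
    (ha : IsIntegral K a) (hu : IsUnit a) : ∃ p : K[X], aeval a p ^ n = a := by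
  let b : Algebra.adjoin K {a} := ⟨a, Algebra.self_mem_adjoin_singleton K a⟩
  have : Module.Finite K (Algebra.adjoin K {a}) :=
    Algebra.finite_adjoin_simple_of_isIntegral ha
  have hb : IsUnit b := IsArtinianRing.isUnit_of_nonZeroDivisor_of_isIntegral' (R := K)
    (comap_nonZeroDivisors_le_of_injective Subtype.val_injective
      (f := (Algebra.adjoin K {a}).val) hu.mem_nonZeroDivisors)
  obtain ⟨c, hc⟩ := exists_pow_eq_of_isUnit hn hb
  obtain ⟨p, hp⟩ : ∃ p : K[X], aeval a p = c := by
    simpa [Algebra.adjoin_singleton_eq_range_aeval] using c.2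
  exact ⟨p, by rw [hp]; exact congrArg Subtype.val hc⟩

end NthRoots

section JordanIsotope

open Polynomial

variable {K A : Type*} [Field K] [Ring A] [Algebra K A]

variable (K) in
/-- The Jordan product `x •_u y` with unit element `u` on an associative algebra, that is, the
product of the isotope at `u⁻¹` of its special Jordan algebra. It extends `jmul` from complex
matrices to arbitrary algebras, and `u` is taken in `Aˣ` so that `u⁻¹` is a genuine inverse. -/
def isotopeMul (u : Aˣ) (x y : A) : A :=
  (1 / 2 : K) • (x * ↑u⁻¹ * y + y * ↑u⁻¹ * x)

theorem isotopeMul_self (h2 : (2 : K) ≠ 0) (u : Aˣ) (x : A) :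
    isotopeMul K u x x = x * ↑u⁻¹ * x := by
  rw [isotopeMul, ← two_smul K, smul_smul, one_div_mul_cancel h2, one_smul]

theorem isotopeMul_mul_unit_of_commute (h2 : (2 : K) ≠ 0) (u : Aˣ) {a b : A} (h : Commute a b) :
    isotopeMul K u (a * u) (b * u) = a * b * u := by
  have hprod (c d : A) : c * u * ↑u⁻¹ * (d * u) = c * d * u := by
    rw [Units.mul_inv_cancel_right, mul_assoc]
  rw [isotopeMul, hprod, hprod, ← h.eq, ← two_smul K, smul_smul, one_div_mul_cancel h2, one_smul]

theorem aeval_mul_unit_mem (h2 : (2 : K) ≠ 0) {u : Aˣ} {L : Submodule K A} (hu : ↑u ∈ L)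
    (hL : ∀ x ∈ L, ∀ y ∈ L, isotopeMul K u x y ∈ L) {a : A} (ha : a * u ∈ L) (p : K[X]) :
    aeval a p * u ∈ L := by
  have hpow (k : ℕ) : a ^ k * u ∈ L := by
    induction k with
    | zero => simpa using hu
    | succ k ih =>
      rw [pow_succ', ← isotopeMul_mul_unit_of_commute h2 u (Commute.self_pow a k)]
      exact hL _ ha _ ih
  rw [aeval_eq_sum_range, Finset.sum_mul]
  refine L.sum_mem fun k _ ↦ ?_
  rw [smul_mul_assoc]
  exact L.smul_mem _ (hpow k)

theorem stmt2_general [IsAlgClosed K] [Algebra.IsIntegral K A] (h2 : (2 : K) ≠ 0) {u : Aˣ}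
    {L : Submodule K A} (hu : ↑u ∈ L) (hL : ∀ x ∈ L, ∀ y ∈ L, isotopeMul K u x y ∈ L)
    {x : A} (hx : x ∈ L) (hxu : IsUnit x) :
    ∃ y ∈ L, isotopeMul K u y y = x ∧ y * ↑u⁻¹ * y = x := by
  let a : A := x * ↑u⁻¹
  have hau : a * u = x := Units.inv_mul_cancel_right x u
  obtain ⟨p, hp⟩ : ∃ p : K[X], aeval a p ^ 2 = a :=
    exists_aeval_pow_eq (by exact_mod_cast h2) (Algebra.IsIntegral.isIntegral a)
      (hxu.mul u⁻¹.isUnit)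
  have hsq : isotopeMul K u (aeval a p * u) (aeval a p * u) = x := by
    rw [isotopeMul_mul_unit_of_commute h2 u (Commute.refl _), ← sq, hp, hau]
  exact ⟨aeval a p * u, aeval_mul_unit_mem h2 hu hL (hau.symm ▸ hx) p, hsq,
    (isotopeMul_self h2 u _).symm.trans hsq⟩

end JordanIsotope

theorem jmul_units_val {n : ℕ} (u : (Mat n)ˣ) (X Y : Mat n) :
    jmul ↑u X Y = isotopeMul ℂ u X Y := by
  rw [jmul, isotopeMul, coe_units_inv]

/-- Square roots exist in any complex Jordan subalgebra `L ⊆ Sⁿ` with unit `U`: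
every invertible `X ∈ L` has a square root `Y ∈ L`, i.e. `Y •_U Y = Y U⁻¹ Y = X`. -/
theorem stmt2 {n : ℕ} (U : Mat n) (hU : IsUnit U.det)
    (L : Submodule ℂ (Mat n)) (hsym : ∀ X ∈ L, Matrix.IsSymm X)
    (hUL : U ∈ L) (hclosed : ∀ X ∈ L, ∀ Y ∈ L, jmul U X Y ∈ L)
    (X : Mat n) (hX : X ∈ L) (hXdet : IsUnit X.det) :
    ∃ Y ∈ L, jmul U Y Y = X ∧ Y * U⁻¹ * Y = X := by
  obtain ⟨u, rfl⟩ := (isUnit_iff_isUnit_det U).2 hU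
  simp only [jmul_units_val, ← coe_units_inv] at hclosed ⊢
  exact stmt2_general two_ne_zero hUL hclosed hX ((isUnit_iff_isUnit_det X).2 hXdet)
end
end

section
/- Let L ⊆ Sⁿ be a Jordan subalgebra of (Sⁿ, •_U) with unit U ∈ L invertible, and let V ∈ L be any invertible matrix. Then there exists a linear bijection φ : L → L with φ(U) = V and φ(X •_U Y) = φ(X) •_V φ(Y) for all X, Y ∈ L; that is, (L, •_U) and (L, •_V) are isomorphic as Jordan algebras. -/
open Matrix

noncomputable section

/-
Let `a = V * U⁻¹`. Since `a` is invertible and integral over an algebraically closed field, it has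
a square root `b` which is a polynomial in `a`: interpolation at the eigenvalues gives a square root
up to a nilpotent, and Newton iteration corrects it. The elements `a ^ k * U` are the Jordan powers
of `V`, so `W = b * U` lies in `L`, and it is a square root of `V` for `•_U`: `W * U⁻¹ * W = V`.
The quadratic representation `X ↦ W * U⁻¹ * X * U⁻¹ * W` preserves `L`, because it is given by the
Jordan polynomial `2 W • (W • X) - (W • W) • X`, and it carries `•_U` to `•_V`.
-/

section SquareRoots

open Polynomial

theorem isNilpotent_aeval_of_forall_isRoot {K A : Type*} [Field K] [Ring A] [Algebra K A]
    {a : A} (ha : IsIntegral K a) (hsplit : (minpoly K a).Splits) {p : K[X]}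
    (hp : ∀ z ∈ (minpoly K a).roots, p.IsRoot z) : IsNilpotent (aeval a p) := by
  have hdvd : minpoly K a ∣ p ^ (minpoly K a).roots.card :=
    calc
      minpoly K a = ((minpoly K a).roots.map (X - C ·)).prod :=
        hsplit.eq_prod_roots_of_monic (minpoly.monic ha)
      _ ∣ ((minpoly K a).roots.map fun _ => p).prod :=
        Multiset.prod_dvd_prod_of_dvd _ _ fun z hz => dvd_iff_isRoot.2 (hp z hz)
      _ = p ^ (minpoly K a).roots.card := by rw [Multiset.map_const', Multiset.prod_replicate]
  exact ⟨_, by rw [← map_pow, minpoly.dvd_iff.1 hdvd]⟩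

theorem exists_isNilpotent_aeval_sq_sub {K A : Type*} [Field K] [IsAlgClosed K] [Ring A]
    [Algebra K A] {a : A} (ha : IsIntegral K a) :
    ∃ p : K[X], IsNilpotent (aeval a p ^ 2 - a) := by
  classical
  choose s hs using fun z : K => IsAlgClosed.exists_pow_nat_eq z two_pos
  let p := Lagrange.interpolate (minpoly K a).roots.toFinset id s
  have hp : ∀ z ∈ (minpoly K a).roots, p.eval z = s z := fun z hz =>
    Lagrange.eval_interpolate_at_node s Function.injective_id.injOn (Multiset.mem_toFinset.2 hz)
  have hnil : IsNilpotent (aeval a (p ^ 2 - X)) :=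
    isNilpotent_aeval_of_forall_isRoot ha (IsAlgClosed.splits _) fun z hz => by
      simp [hp z hz, hs]
  exact ⟨p, by simpa using hnil⟩

theorem exists_sq_eq_of_isNilpotent_sq_sub {S : Type*} [CommRing S] (h2 : IsUnit (2 : S))
    {a x : S} (ha : IsUnit a) (hx : IsNilpotent (x ^ 2 - a)) : ∃ r : S, r ^ 2 = a := by
  have hx_unit : IsUnit x := by
    have hsq : IsUnit (a + (x ^ 2 - a)) := hx.isUnit_add_left_of_commute ha (Commute.all _ _)
    rwa [add_sub_cancel, isUnit_pow_iff two_ne_zero] at hsq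
  have hderiv : IsUnit (aeval x (derivative (X ^ 2 - C a))) := by
    simpa [one_add_one_eq_two] using h2.mul hx_unit
  obtain ⟨r, ⟨-, hr⟩, -⟩ :=
    existsUnique_nilpotent_sub_and_aeval_eq_zero (P := X ^ 2 - C a) (by simpa using hx) hderiv
  exact ⟨r, sub_eq_zero.1 (by simpa using hr)⟩

theorem exists_sq_eq_of_isIntegral {K S : Type*} [Field K] [IsAlgClosed K] [CommRing S]
    [Algebra K S] (h2 : (2 : K) ≠ 0) {a : S} (ha : IsIntegral K a) (hu : IsUnit a) :
    ∃ b : S, b ^ 2 = a := by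
  obtain ⟨p, hp⟩ := exists_isNilpotent_aeval_sq_sub ha
  have h2S : IsUnit (2 : S) := by simpa only [map_ofNat] using h2.isUnit.map (algebraMap K S)
  exact exists_sq_eq_of_isNilpotent_sq_sub h2S hu hp

open scoped IsMulCommutative in
theorem exists_units_mem_adjoin_sq_eq {K A : Type*} [Field K] [IsAlgClosed K] [Ring A]
    [Algebra K A] (h2 : (2 : K) ≠ 0) {a : Aˣ} (ha : IsIntegral K (a : A)) :
    ∃ b : Aˣ, b ^ 2 = a ∧ (b : A) ∈ Algebra.adjoin K {(a : A)} ∧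
      (↑b⁻¹ : A) ∈ Algebra.adjoin K {(a : A)} := by
  let S := Algebra.adjoin K {(a : A)}
  let a' : S := ⟨a, Algebra.self_mem_adjoin_singleton K _⟩
  have ha' : IsIntegral K a' := (isIntegral_algHom_iff S.val Subtype.val_injective).1 ha
  have hu : IsUnit a' := by
    refine IsArtinianRing.isUnit_of_isIntegral_of_nonZeroDivisor ha' ?_
    refine mem_nonZeroDivisors_iff_right.2 fun x hx => Subtype.ext ?_
    exact a.mul_left_eq_zero.1 (congrArg Subtype.val hx)
  obtain ⟨b, hb⟩ := exists_sq_eq_of_isIntegral h2 ha' hu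
  have hbu : IsUnit b := (isUnit_pow_iff two_ne_zero).1 (hb ▸ hu)
  lift b to Sˣ using hbu
  refine ⟨Units.map (S.val : S →* A) b, Units.ext ?_, (b : S).2, (↑b⁻¹ : S).2⟩
  exact congrArg Subtype.val hb

end SquareRoots

section QuadraticRepresentation

variable {R A : Type*} [CommRing R] [Ring A] [Algebra R A]

variable (R) in
/-- The quadratic representation `P_w` of the Jordan product `½ (x u⁻¹ y + y u⁻¹ x)`, in its
associative form, which avoids the division by two. -/
def quadraticRep (u : Aˣ) (w : A) : A →ₗ[R] A :=
  LinearMap.mulLeftRight R (w * ↑u⁻¹, ↑u⁻¹ * w)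

theorem quadraticRep_apply (u : Aˣ) (w x : A) :
    quadraticRep R u w x = w * ↑u⁻¹ * x * (↑u⁻¹ * w) :=
  rfl

theorem quadraticRep_unit (u : Aˣ) (w : A) : quadraticRep R u w u = w * ↑u⁻¹ * w := by
  simp [quadraticRep_apply, mul_assoc]

theorem quadraticRep_comp_eq_id {u : Aˣ} {w w' : A} (h : w * ↑u⁻¹ * w' = u)
    (h' : w' * ↑u⁻¹ * w = u) : quadraticRep R u w ∘ₗ quadraticRep R u w' = .id := by
  ext x
  calc
    quadraticRep R u w (quadraticRep R u w' x) =
        w * ↑u⁻¹ * w' * ↑u⁻¹ * x * (↑u⁻¹ * (w' * ↑u⁻¹ * w)) := by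
      simp only [quadraticRep_apply, mul_assoc]
    _ = x := by simp [h, h']

end QuadraticRepresentation

section Isotope

variable {R A : Type*} [CommRing R] [Invertible (2 : R)] [Ring A] [Algebra R A]

variable (R) in
/-- The Jordan product with unit `u` on an associative algebra: `jmul` with matrices replaced by an
arbitrary algebra in which `2` is invertible. -/
def jordanMul (u : Aˣ) (x y : A) : A :=
  ⅟(2 : R) • (x * ↑u⁻¹ * y + y * ↑u⁻¹ * x)

theorem quadraticRep_eq_jordanMul (u : Aˣ) (w x : A) :
    quadraticRep R u w x = (2 : R) • jordanMul R u w (jordanMul R u w x) -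
      jordanMul R u (jordanMul R u w w) x := by
  have h2 : ⅟(2 : R) * 2 = 1 := invOf_mul_self 2
  simp only [quadraticRep_apply, jordanMul, mul_add, add_mul, smul_mul_assoc, mul_smul_comm,
    mul_assoc]
  match_scalars
  · linear_combination -(1 + 2 * ⅟(2 : R)) * h2
  all_goals ring

theorem quadraticRep_jordanMul {u v w : Aˣ} (hw : w * u⁻¹ * w = v) (x y : A) :
    quadraticRep R u w (jordanMul R u x y) =
      jordanMul R v (quadraticRep R u w x) (quadraticRep R u w y) := by
  subst hw
  simp [quadraticRep_apply, jordanMul, mul_add, add_mul, mul_assoc]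

/-- A unital Jordan subalgebra for the product `jordanMul R u`. -/
structure IsJordanSubalgebra (u : Aˣ) (L : Submodule R A) : Prop where
  unit_mem : ↑u ∈ L
  mul_mem {x y : A} : x ∈ L → y ∈ L → jordanMul R u x y ∈ L

namespace IsJordanSubalgebra

variable {u : Aˣ} {L : Submodule R A} (hL : IsJordanSubalgebra u L)
include hL

theorem quadraticRep_mem {w x : A} (hw : w ∈ L) (hx : x ∈ L) : quadraticRep R u w x ∈ L := by
  rw [quadraticRep_eq_jordanMul]
  exact L.sub_mem (L.smul_mem _ (hL.mul_mem hw (hL.mul_mem hw hx)))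
    (hL.mul_mem (hL.mul_mem hw hw) hx)

theorem pow_mul_unit_mem {v : A} (hv : v ∈ L) (k : ℕ) : (v * ↑u⁻¹) ^ k * u ∈ L := by
  induction k with
  | zero => simpa using hL.unit_mem
  | succ k ih =>
    have hpow : jordanMul R u v ((v * ↑u⁻¹) ^ k * u) = (v * ↑u⁻¹) ^ (k + 1) * u := by
      have hl : v * ↑u⁻¹ * ((v * ↑u⁻¹) ^ k * u) = (v * ↑u⁻¹) ^ (k + 1) * u := by
        rw [pow_succ', mul_assoc (v * _)]
      have hr : (v * ↑u⁻¹) ^ k * u * ↑u⁻¹ * v = (v * ↑u⁻¹) ^ (k + 1) * u := by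
        simp [pow_succ, mul_assoc]
      rw [jordanMul, hl, hr, ← two_smul R, invOf_smul_smul]
    exact hpow ▸ hL.mul_mem hv ih

theorem mul_unit_mem_of_mem_adjoin {v b : A} (hv : v ∈ L)
    (hb : b ∈ Algebra.adjoin R {v * (↑u⁻¹ : A)}) : b * u ∈ L := by
  rw [← Subalgebra.mem_toSubmodule, Algebra.adjoin_eq_span] at hb
  suffices hspan : Submodule.span R (Submonoid.closure {v * (↑u⁻¹ : A)}) ≤
      L.comap (LinearMap.mulRight R (u : A)) from hspan hb
  refine Submodule.span_le.2 fun c hc => ?_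
  obtain ⟨k, rfl⟩ := Submonoid.mem_closure_singleton.1 hc
  exact hL.pow_mul_unit_mem hv k

/-- The quadratic representation of `w` as an automorphism of the module `L`. Here `w'` is the
inverse of `w` with respect to `jordanMul R u`, expressed by products in the associative algebra. -/
def quadraticEquiv {w w' : A} (hw : w ∈ L) (hw' : w' ∈ L) (h : w * ↑u⁻¹ * w' = u)
    (h' : w' * ↑u⁻¹ * w = u) : L ≃ₗ[R] L :=
  .ofLinearMap
    ((quadraticRep R u w).restrict fun _ => hL.quadraticRep_mem hw)
    ((quadraticRep R u w').restrict fun _ => hL.quadraticRep_mem hw')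
    (LinearMap.ext fun x => Subtype.ext (LinearMap.congr_fun (quadraticRep_comp_eq_id h h') x))
    (LinearMap.ext fun x => Subtype.ext (LinearMap.congr_fun (quadraticRep_comp_eq_id h' h) x))

end IsJordanSubalgebra

end Isotope

theorem jmul_coe_units {n : ℕ} (u : (Mat n)ˣ) (X Y : Mat n) :
    jmul u X Y = jordanMul ℂ u X Y := by
  rw [jmul, jordanMul, Matrix.coe_units_inv, invOf_eq_inv, one_div]

theorem stmt3_general {K A : Type*} [Field K] [IsAlgClosed K] [Invertible (2 : K)] [Ring A]
    [Algebra K A] {u v : Aˣ} {L : Submodule K A} (hL : IsJordanSubalgebra u L) (hv : ↑v ∈ L)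
    (hint : IsIntegral K (↑(v * u⁻¹) : A)) :
    ∃ φ : L ≃ₗ[K] L, (φ ⟨u, hL.unit_mem⟩ : A) = v ∧
      ∀ x y : L, (φ ⟨jordanMul K u x y, hL.mul_mem x.2 y.2⟩ : A) =
        jordanMul K v (φ x : A) (φ y : A) := by
  obtain ⟨b, hb, hb_mem, hb_inv_mem⟩ :=
    exists_units_mem_adjoin_sq_eq (Invertible.ne_zero (2 : K)) hint
  have hw : b * u * u⁻¹ * (b * u) = v := by
    rw [mul_inv_cancel_right, ← mul_assoc, ← sq, hb, inv_mul_cancel_right]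
  let φ := hL.quadraticEquiv (hL.mul_unit_mem_of_mem_adjoin hv hb_mem)
    (hL.mul_unit_mem_of_mem_adjoin hv hb_inv_mem) (by simp) (by simp)
  refine ⟨φ, ?_, fun x y => ?_⟩
  · exact (quadraticRep_unit u _).trans (congrArg Units.val hw)
  · exact quadraticRep_jordanMul hw x y

/-- For a Jordan subalgebra `L` of `(Sⁿ, •_U)` and any invertible `V ∈ L`, there is a
linear bijection `φ : L → L` with `φ(U) = V` and `φ(X •_U Y) = φ(X) •_V φ(Y)`;
that is, `(L, •_U) ≅ (L, •_V)` as Jordan algebras. -/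
theorem stmt3 {n : ℕ} (U : Mat n) (hU : IsUnit U.det)
    (L : Submodule ℂ (Mat n)) (hsym : ∀ X ∈ L, Matrix.IsSymm X)
    (hUL : U ∈ L) (hclosed : ∀ X ∈ L, ∀ Y ∈ L, jmul U X Y ∈ L)
    (V : Mat n) (hVL : V ∈ L) (hVdet : IsUnit V.det) :
    ∃ φ : L ≃ₗ[ℂ] L,
      (φ ⟨U, hUL⟩ : Mat n) = V ∧
      ∀ X Y : L, (φ ⟨jmul U X Y, hclosed X X.2 Y Y.2⟩ : Mat n) =
        jmul V (φ X : Mat n) (φ Y : Mat n) := by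
  lift U to (Mat n)ˣ using (isUnit_iff_isUnit_det U).2 hU
  lift V to (Mat n)ˣ using (isUnit_iff_isUnit_det V).2 hVdet
  simp only [jmul_coe_units] at hclosed ⊢
  exact stmt3_general ⟨hUL, fun hX hY => hclosed _ hX _ hY⟩ hVL (Algebra.IsIntegral.isIntegral _)
end
end

section
/- Let L ⊆ Sⁿ be a Jordan subalgebra of (Sⁿ, •_U) with unit U ∈ L invertible and with dim L = 2. Then there exists X ∈ L such that {U, X} is a basis of L and either X •_U X = X, or X •_U X = 0. -/
open Matrix

noncomputable section

/-!
Let `u` be a unit for the product and `y` an element of `L` that is not a multiple of `u`. Since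
`y²` lies in `L = span {u, y}`, the element `y` satisfies a monic quadratic equation, which factors
as `(y - r u)(y - s u) = 0` over an algebraically closed field. If `r = s`, then `x = y - r u`
squares to zero. Otherwise `z = y - r u` satisfies `z² = z (y - s u) + (s - r) z = (s - r) z`, so
that `x = (s - r)⁻¹ z` is idempotent.
-/

open Module Submodule

section LinearAlgebra

variable {k V : Type*} [Field k] [AddCommGroup V] [Module k V] {L : Submodule k V}

theorem exists_add_eq_and_mul_eq [IsAlgClosed k] (b c : k) : ∃ r s : k, r + s = b ∧ r * s = c := by
  open Polynomial in
  obtain ⟨r, hr⟩ := IsAlgClosed.exists_root (C 1 * X ^ 2 + C (-b) * X + C c)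
    (by rw [degree_quadratic one_ne_zero]; exact two_ne_zero)
  simp only [IsRoot.def, eval_add, eval_mul, eval_C, eval_pow, eval_X] at hr
  exact ⟨r, b - r, add_sub_cancel r b, by linear_combination -hr⟩

theorem exists_mem_linearIndependent_pair {u : V} (hL : 1 < finrank k L) (huL : u ∈ L)
    (hu : u ≠ 0) : ∃ y ∈ L, LinearIndependent k ![u, y] := by
  obtain ⟨y, hy⟩ := exists_linearIndependent_pair_of_one_lt_finrank (x := (⟨u, huL⟩ : L)) hL
    (by simpa only [ne_eq, mk_eq_zero] using hu)
  have hcomp : L.subtype ∘ ![⟨u, huL⟩, y] = ![u, y] := (FinVec.map_eq _ _).symm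
  exact ⟨y, y.2, hcomp ▸ hy.map' L.subtype L.ker_subtype⟩

theorem span_pair_eq_of_linearIndependent {u x : V} (hL : finrank k L = 2) (huL : u ∈ L)
    (hxL : x ∈ L) (hux : LinearIndependent k ![u, x]) : span k {u, x} = L := by
  have : FiniteDimensional k L := .of_finrank_pos (by omega)
  apply eq_of_le_of_finrank_eq (span_le.2 (Set.pair_subset huL hxL))
  rw [hL, ← Matrix.range_cons_cons_empty u x ![], finrank_span_eq_card hux, Fintype.card_fin]

end LinearAlgebra

section UnitalProduct

theorem bilin_sub_smul_unit {R M : Type*} [CommRing R] [AddCommGroup M] [Module R M]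
    {B : M →ₗ[R] M →ₗ[R] M} {u : M} (hleft : ∀ x, B u x = x) (hright : ∀ x, B x u = x)
    (y : M) (r s : R) :
    B (y - r • u) (y - s • u) = B y y - (r + s) • y + (r * s) • u := by
  simp only [map_sub, map_smul, LinearMap.sub_apply, LinearMap.smul_apply, hleft, hright]
  module

variable {k V : Type*} [Field k] [AddCommGroup V] [Module k V]
  {B : V →ₗ[k] V →ₗ[k] V} {u : V}

theorem exists_bilin_sub_smul_unit_eq_zero [IsAlgClosed k] (hleft : ∀ x, B u x = x)
    (hright : ∀ x, B x u = x) {y : V} (hy : B y y ∈ span k {u, y}) :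
    ∃ r s : k, B (y - r • u) (y - s • u) = 0 := by
  obtain ⟨a, b, hab⟩ := mem_span_pair.1 hy
  obtain ⟨r, s, hadd, hmul⟩ := exists_add_eq_and_mul_eq b (-a)
  refine ⟨r, s, ?_⟩
  rw [bilin_sub_smul_unit hleft hright, ← hab, hadd, hmul]
  module

theorem exists_bilin_self_eq_self_or_eq_zero (hright : ∀ x, B x u = x)
    {y : V} (huy : LinearIndependent k ![u, y]) {r s : k}
    (hrs : B (y - r • u) (y - s • u) = 0) :
    ∃ x ∈ span k {u, y}, LinearIndependent k ![u, x] ∧ (B x x = x ∨ B x x = 0) := by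
  set z := y - r • u with hz
  have hzL : z ∈ span k {u, y} := mem_span_pair.2 ⟨-r, 1, by rw [hz]; module⟩
  have huz : LinearIndependent k ![u, z] := by
    rwa [hz, sub_eq_neg_add, ← neg_smul, LinearIndependent.pair_add_smul_right_iff]
  have hzz : B z z = (s - r) • z := by
    have : z = (y - s • u) + (s - r) • u := by rw [hz]; module
    calc B z z = B z ((y - s • u) + (s - r) • u) := by rw [← this]
      _ = (s - r) • z := by rw [map_add, hrs, map_smul, hright, zero_add]
  obtain hsr | hsr := eq_or_ne (s - r) 0
  · exact ⟨z, hzL, huz, .inr (by rw [hzz, hsr, zero_smul])⟩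
  · refine ⟨(s - r)⁻¹ • z, smul_mem _ _ hzL, ?_, .inl ?_⟩
    · simpa only [one_smul] using
        (LinearIndependent.pair_smul_smul_iff isUnit_one (inv_ne_zero hsr).isUnit).2 huz
    · rw [map_smul, map_smul, LinearMap.smul_apply, hzz, inv_smul_smul₀ hsr]

theorem stmt5_general [IsAlgClosed k] (hleft : ∀ x, B u x = x) (hright : ∀ x, B x u = x)
    {L : Submodule k V} (huL : u ∈ L) (hsq : ∀ x ∈ L, B x x ∈ L) (hdim : finrank k L = 2) :
    ∃ x ∈ L, LinearIndependent k ![u, x] ∧ span k {u, x} = L ∧ (B x x = x ∨ B x x = 0) := by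
  have hu : u ≠ 0 := by
    rintro rfl
    have hL : L = ⊥ := L.eq_bot_iff.2 fun x _ ↦ by rw [← hright x, map_zero]
    rw [hL, finrank_bot] at hdim
    exact two_ne_zero hdim.symm
  obtain ⟨y, hyL, huy⟩ := exists_mem_linearIndependent_pair (hdim ▸ one_lt_two) huL hu
  have hspan : span k {u, y} = L := span_pair_eq_of_linearIndependent hdim huL hyL huy
  obtain ⟨r, s, hrs⟩ := exists_bilin_sub_smul_unit_eq_zero hleft hright (hspan ▸ hsq y hyL)
  obtain ⟨x, hx, hux, hxx⟩ := exists_bilin_self_eq_self_or_eq_zero hright huy hrs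
  have hxL : x ∈ L := hspan ▸ hx
  exact ⟨x, hxL, hux, span_pair_eq_of_linearIndependent hdim huL hxL hux, hxx⟩

end UnitalProduct

section JordanProduct

variable {n : ℕ} {U : Mat n}

theorem jmul_comm (X Y : Mat n) : jmul U X Y = jmul U Y X := by
  rw [jmul, jmul, add_comm]

theorem jmul_add_right (X Y Z : Mat n) : jmul U X (Y + Z) = jmul U X Y + jmul U X Z := by
  simp only [jmul, Matrix.mul_add, Matrix.add_mul]
  module

theorem jmul_smul_right (c : ℂ) (X Y : Mat n) : jmul U X (c • Y) = c • jmul U X Y := by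
  simp only [jmul, Matrix.mul_smul, Matrix.smul_mul]
  module

theorem jmul_unit_left (hU : IsUnit U.det) (X : Mat n) : jmul U U X = X := by
  rw [jmul, mul_nonsing_inv U hU, nonsing_inv_mul_cancel_right U X hU, Matrix.one_mul]
  module

theorem jmul_unit_right (hU : IsUnit U.det) (X : Mat n) : jmul U X U = X := by
  rw [jmul_comm, jmul_unit_left hU]

/-- The Jordan product `jmul U` as a bilinear map, on all matrices rather than only on the
symmetric ones. -/
def jmulBilin (U : Mat n) : Mat n →ₗ[ℂ] Mat n →ₗ[ℂ] Mat n :=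
  LinearMap.mk₂ ℂ (jmul U)
    (fun X Y Z ↦ by simp only [jmul_comm _ Z, jmul_add_right])
    (fun c X Y ↦ by simp only [jmul_comm _ Y, jmul_smul_right])
    jmul_add_right jmul_smul_right

end JordanProduct

/-- Every 2-dimensional Jordan subalgebra `L` of `(Sⁿ, •_U)` has a basis `{U, X}`
where either `X •_U X = X` or `X •_U X = 0`. -/
theorem stmt5 {n : ℕ} (U : Mat n) (hU : IsUnit U.det)
    (L : Submodule ℂ (Mat n)) (hsym : ∀ X ∈ L, Matrix.IsSymm X)
    (hUL : U ∈ L) (hclosed : ∀ X ∈ L, ∀ Y ∈ L, jmul U X Y ∈ L)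
    (hdim : Module.finrank ℂ L = 2) :
    ∃ X ∈ L, LinearIndependent ℂ ![U, X] ∧
      Submodule.span ℂ {U, X} = L ∧
      (jmul U X X = X ∨ jmul U X X = 0) :=
  stmt5_general (B := jmulBilin U) (jmul_unit_left hU) (jmul_unit_right hU) hUL
    (fun X hX ↦ hclosed X hX X hX) hdim
end
end

section
/- Let L ⊆ Sⁿ be a Jordan subalgebra of (Sⁿ, •_U) with unit U ∈ L invertible, and suppose L ≠ Sⁿ. Then the codimension of L in Sⁿ is at least n − 1, i.e., dim L ≤ n(n+1)/2 − (n − 1). -/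
open Matrix

noncomputable section

/-- The space `Sⁿ` of symmetric `n × n` complex matrices, as a submodule of all
`n × n` matrices. -/
def symmSub (n : ℕ) : Submodule ℂ (Mat n) where
  carrier := {X : Mat n | X.IsSymm}
  add_mem' := fun ha hb => ha.add hb
  zero_mem' := Matrix.isSymm_zero
  smul_mem' := fun c _ hX => hX.smul c

/-!
After a congruence the unit of the subalgebra `J` is `diagonal u`. The vectors `d` with
`diagonal (u * d) ∈ J` form a subalgebra `D` of `ι → K`. If `D` consists of constants, `J` meets the
diagonal matrices in at most a line, and the bound follows by counting dimensions. If all the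
off-diagonal symmetric units at positions `(a, b)` separated by some `f ∈ D` lie in `J`, and such a
pair exists, then `J` is everything. Otherwise some separated unit at `(a, b)` is missing from `J`,
and tilting the orthogonal frame within the plane of `e a` and `e b` makes `D` strictly smaller: a
new diagonal element with different values at `a` and `b` would have an off-diagonal part at
`(a, b)`, which the double commutator `[f, [f, ·]]` isolates inside `J`.
-/

open Module

section SymmetricMatrices

variable {K ι : Type*} [Field K]

/-- The space of symmetric matrices over an arbitrary field and index type, generalizing
`symmSub`. -/
def symmMatrices (K ι : Type*) [Field K] : Submodule K (Matrix ι ι K) where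
  carrier := {X | X.IsSymm}
  add_mem' := IsSymm.add
  zero_mem' := isSymm_zero
  smul_mem' c _ hX := hX.smul c

/-- Symmetric matrices as functions on unordered pairs of indices. -/
def symmMatricesEquivSym2 (K ι : Type*) [Field K] : symmMatrices K ι ≃ₗ[K] (Sym2 ι → K) where
  toFun X := Sym2.lift ⟨X.1, fun i j => X.2.apply j i⟩
  invFun g := ⟨of fun i j => g s(i, j), IsSymm.ext fun _ _ => congrArg g Sym2.eq_swap⟩
  map_add' X Y := by ext ⟨i, j⟩; rfl
  map_smul' c X := by ext ⟨i, j⟩; rfl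
  left_inv X := rfl
  right_inv g := by ext ⟨i, j⟩; rfl

lemma finrank_symmMatrices [Fintype ι] :
    finrank K (symmMatrices K ι) = Fintype.card ι * (Fintype.card ι + 1) / 2 := by
  classical
  rw [(symmMatricesEquivSym2 K ι).finrank_eq, finrank_fintype_fun_eq_card, Sym2.card,
    Nat.choose_two_right, Nat.add_sub_cancel, mul_comm]

variable [DecidableEq ι]

/-- The symmetric matrix with entries `1` at `(a, b)` and `(b, a)` when `a ≠ b`, and twice a
diagonal matrix unit when `a = b`. -/
def symmSingle (K : Type*) [Field K] (a b : ι) : Matrix ι ι K := single a b 1 + single b a 1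

variable [Fintype ι]

lemma two_smul_eq_sum_symmSingle {X : Matrix ι ι K} (hX : X.IsSymm) :
    (2 : K) • X = ∑ i, ∑ j, X i j • symmSingle K i j := by
  have hsum : ∑ i, ∑ j, X i j • single i j (1 : K) = X := by
    simpa using (matrix_eq_sum_single X).symm
  have hsum_swap : ∑ i, ∑ j, X i j • single j i (1 : K) = X := by
    rw [Finset.sum_comm]
    simpa only [hX.apply] using hsum
  simp only [symmSingle, smul_add, Finset.sum_add_distrib, hsum, hsum_swap, two_smul]

/-- The change of variables `X ↦ Aᵀ X A` of bilinear forms. -/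
def congruence (A : Matrix ι ι K) : Matrix ι ι K →ₗ[K] Matrix ι ι K :=
  LinearMap.mulLeftRight K (Aᵀ, A)

lemma congruence_apply (A X : Matrix ι ι K) : congruence A X = Aᵀ * X * A := rfl

lemma isSymm_congruence (A : Matrix ι ι K) {X : Matrix ι ι K} (hX : X.IsSymm) :
    (congruence A X).IsSymm := by
  simp only [IsSymm, congruence_apply, transpose_mul, transpose_transpose, hX.eq, Matrix.mul_assoc]

lemma congruence_congruence_inv {A : Matrix ι ι K} (hA : IsUnit A.det) (X : Matrix ι ι K) :
    congruence A (congruence A⁻¹ X) = X := by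
  have hA' : IsUnit Aᵀ.det := by rwa [det_transpose]
  simp only [congruence_apply, transpose_nonsing_inv, ← Matrix.mul_assoc,
    mul_nonsing_inv _ hA', Matrix.one_mul]
  rw [Matrix.mul_assoc, nonsing_inv_mul _ hA, Matrix.mul_one]

lemma congruence_surjective {A : Matrix ι ι K} (hA : IsUnit A.det) :
    Function.Surjective (congruence A) := fun X => ⟨_, congruence_congruence_inv hA X⟩

lemma isSymm_of_isSymm_congruence {A X : Matrix ι ι K} (hA : IsUnit A.det)
    (hX : (congruence A X).IsSymm) : X.IsSymm := by
  have h := congruence_congruence_inv (isUnit_nonsing_inv_det A hA) X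
  rw [nonsing_inv_nonsing_inv A hA] at h
  exact h ▸ isSymm_congruence A⁻¹ hX

lemma isUnit_det_of_congruence {A V : Matrix ι ι K} (h : IsUnit (congruence A V).det) :
    IsUnit A.det ∧ IsUnit V.det := by
  rw [congruence_apply, det_mul, det_mul, IsUnit.mul_iff, IsUnit.mul_iff] at h
  exact ⟨h.2, h.1.2⟩

lemma comap_congruence_symmMatrices {A : Matrix ι ι K} (hA : IsUnit A.det) :
    (symmMatrices K ι).comap (congruence A) = symmMatrices K ι :=
  le_antisymm (fun _ hX => isSymm_of_isSymm_congruence hA hX) fun _ hX => isSymm_congruence A hX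

lemma finrank_le_finrank_comap_congruence {A : Matrix ι ι K} (hA : IsUnit A.det)
    (J : Submodule K (Matrix ι ι K)) : finrank K J ≤ finrank K (J.comap (congruence A)) := by
  conv_lhs => rw [← Submodule.map_comap_eq_of_surjective (congruence_surjective hA) J]
  exact Submodule.finrank_map_le _ _

lemma exists_congruence_diagonal_eq [NeZero (2 : K)] {U : Matrix ι ι K} (hU : U.IsSymm) :
    ∃ (A : Matrix ι ι K) (u : ι → K), congruence A (diagonal u) = U := by
  have : Invertible (2 : K) := invertibleOfNonzero two_ne_zero
  have hB : LinearMap.IsSymm U.toBilin' :=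
    LinearMap.BilinForm.isSymm_iff.mp (isSymm_toBilin'_iff_isSymm.mpr hU)
  obtain ⟨v, hv⟩ := LinearMap.BilinForm.exists_orthogonal_basis hB
  let e : Fin (finrank K (ι → K)) ≃ ι :=
    (finCongr (finrank_fintype_fun_eq_card K)).trans (Fintype.equivFin ι).symm
  let w : Basis ι K (ι → K) := v.reindex e
  have hw : LinearMap.BilinForm.toMatrix w U.toBilin' =
      diagonal fun i => U.toBilin' (w i) (w i) := by
    ext i j
    rcases eq_or_ne i j with rfl | hij
    · simp [LinearMap.BilinForm.toMatrix_apply]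
    · have hortho : U.toBilin' (v (e.symm i)) (v (e.symm j)) = 0 :=
        hv (e.symm.injective.ne hij)
      simpa [LinearMap.BilinForm.toMatrix_apply, hij, w] using hortho
  refine ⟨w.toMatrix (Pi.basisFun K ι), fun i => U.toBilin' (w i) (w i), ?_⟩
  rw [congruence_apply, ← hw, LinearMap.BilinForm.toMatrix_mul_basis_toMatrix,
    LinearMap.BilinForm.toMatrix_basisFun, LinearMap.BilinForm.toMatrix'_toBilin']

end SymmetricMatrices

section DiagonalPart

variable {K ι : Type*} [Field K] [DecidableEq ι] {u : ι → K} {J : Submodule K (Matrix ι ι K)}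

/-- The vectors `d` with `diagonal (u * d) ∈ J`. When `diagonal u` is the unit of `J`, they are the
diagonal operators among the `(diagonal u)⁻¹ X` with `X ∈ J`. -/
def diagonalPart (u : ι → K) (J : Submodule K (Matrix ι ι K)) : Submodule K (ι → K) :=
  J.comap (diagonalLinearMap ι K K ∘ₗ LinearMap.mulLeft K u)

lemma mem_diagonalPart {d : ι → K} : d ∈ diagonalPart u J ↔ diagonal (u * d) ∈ J := Iff.rfl

lemma single_mem_of_mem_diagonalPart {a : ι} (hu : u a ≠ 0)
    (h : Pi.single a 1 ∈ diagonalPart u J) : single a a 1 ∈ J := by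
  have h' := J.smul_mem (u a)⁻¹ (mem_diagonalPart.mp h)
  rwa [← Pi.single_mul_right, mul_one, diagonal_single, smul_single, smul_eq_mul,
    inv_mul_cancel₀ hu] at h'

lemma eq_symmMatrices_of_symmSingle_mem [Finite ι] [NeZero (2 : K)] (hJ : J ≤ symmMatrices K ι)
    (hmem : ∀ a b, symmSingle K a b ∈ J) : J = symmMatrices K ι := by
  have := Fintype.ofFinite ι
  refine le_antisymm hJ fun X hX => (J.smul_mem_iff (two_ne_zero (α := K))).mp ?_
  rw [two_smul_eq_sum_symmSingle hX]
  exact J.sum_mem fun i _ => J.sum_mem fun j _ => J.smul_mem _ (hmem i j)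

lemma finrank_add_card_le_of_diagonalPart_constant [Fintype ι] (hu : ∀ a, u a ≠ 0)
    (hJ : J ≤ symmMatrices K ι) (hconst : ∀ d ∈ diagonalPart u J, ∀ a b, d a = d b) :
    finrank K J + Fintype.card ι ≤ finrank K (symmMatrices K ι) + 1 := by
  let Δ : Submodule K (Matrix ι ι K) := LinearMap.range (diagonalLinearMap ι K K)
  have hΔ : finrank K Δ = Fintype.card ι := by
    rw [LinearMap.finrank_range_of_inj diagonal_injective, finrank_fintype_fun_eq_card]
  have hsup : finrank K (J ⊔ Δ : Submodule K (Matrix ι ι K)) ≤ finrank K (symmMatrices K ι) := by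
    refine Submodule.finrank_mono (sup_le hJ ?_)
    rintro _ ⟨d, rfl⟩
    exact isSymm_diagonal d
  have hinf : finrank K (J ⊓ Δ : Submodule K (Matrix ι ι K)) ≤ 1 := by
    have hle : J ⊓ Δ ≤ K ∙ diagonal u := by
      rintro _ ⟨hdJ, d, rfl⟩
      have hd : u * (u⁻¹ * d) = d := by ext i; simp [hu i]
      have hmem : u⁻¹ * d ∈ diagonalPart u J := mem_diagonalPart.mpr (by rwa [hd])
      obtain ⟨c, hc⟩ : ∃ c, ∀ a, (u⁻¹ * d) a = c := by
        rcases isEmpty_or_nonempty ι with _ | ⟨⟨b⟩⟩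
        · exact ⟨0, isEmptyElim⟩
        · exact ⟨_, fun a => hconst _ hmem a b⟩
      refine Submodule.mem_span_singleton.mpr ⟨c, ?_⟩
      rw [diagonalLinearMap_apply, ← hd, ← diagonal_smul]
      congr 1
      ext a
      rw [Pi.mul_apply, hc, Pi.smul_apply, smul_eq_mul, mul_comm]
    refine (Submodule.finrank_mono hle).trans ?_
    simpa using finrank_span_le_card ({diagonal u} : Set (Matrix ι ι K))
  have hdim := Submodule.finrank_sup_add_finrank_inf_eq J Δ
  omega

end DiagonalPart

section PlaneFrame

variable {K ι : Type*} [Field K] [DecidableEq ι] {a b : ι}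

lemma vecMulVec_single_add_single (a b : ι) (x y : K) :
    vecMulVec (Pi.single a x + Pi.single b y) (Pi.single a x + Pi.single b y) =
      x ^ 2 • single a a 1 + y ^ 2 • single b b 1 + (x * y) • symmSingle K a b := by
  have hsingle (i j : ι) (p q : K) :
      vecMulVec (Pi.single i p) (Pi.single j q) = (p * q) • single i j 1 := by
    ext k l
    rcases eq_or_ne k i with rfl | hki <;> rcases eq_or_ne l j with rfl | hlj <;>
      simp [vecMulVec_apply, *, Ne.symm]
  simp only [vecMulVec_add, add_vecMulVec, hsingle, symmSingle]
  module

variable [Fintype ι]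

lemma congruence_diagonal (A : Matrix ι ι K) (w : ι → K) :
    congruence A (diagonal w) = ∑ k, w k • vecMulVec (A k) (A k) := by
  ext i j
  rw [congruence_apply, mul_apply, Matrix.sum_apply]
  refine Finset.sum_congr rfl fun k _ => ?_
  rw [mul_diagonal, transpose_apply, Matrix.smul_apply, vecMulVec_apply, smul_eq_mul]
  ring

lemma congruence_updateRow_updateRow (hab : a ≠ b) (x y w : ι → K) (α β : K) :
    congruence (((1 : Matrix ι ι K).updateRow a x).updateRow b y)
        (diagonal (Function.update (Function.update w a α) b β)) =
      diagonal w + (α • vecMulVec x x - w a • single a a 1) +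
        (β • vecMulVec y y - w b • single b b 1) := by
  have hw : diagonal w = congruence 1 (diagonal w) := by simp [congruence_apply]
  rw [add_assoc, ← sub_eq_iff_eq_add', hw, congruence_diagonal, congruence_diagonal,
    ← Finset.sum_sub_distrib, Fintype.sum_eq_add a b hab]
  · have hrow (k : ι) : w k • vecMulVec ((1 : Matrix ι ι K) k) ((1 : Matrix ι ι K) k) =
        w k • single k k 1 := by
      rw [single_eq_single_vecMulVec_single]
      congr <;> ext <;> simp [one_apply, Pi.single_apply, eq_comm]
    simp [hab, hrow]
  · rintro k ⟨hka, hkb⟩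
    simp [hka, hkb]

/-- The change of coordinates from the standard frame to the one in which `e a`, `e b` are replaced
by `e a + t e b` and `t (u b) e a - (u a) e b`, which are orthogonal for the form `diagonal u`. The
two new coordinates are scaled by `u a + t ^ 2 * u b`, which clears their denominators. -/
def planeFrame (u : ι → K) (a b : ι) (t : K) : Matrix ι ι K :=
  ((1 : Matrix ι ι K).updateRow a (Pi.single a (u a) + Pi.single b (t * u b))).updateRow b
    (Pi.single a t + Pi.single b (-1))

/-- The diagonal form which `planeFrame u a b t` pulls back to `diagonal u`. -/
def planeFrameForm (u : ι → K) (a b : ι) (t : K) : ι → K :=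
  Function.update (Function.update u a (u a + t ^ 2 * u b)⁻¹) b
    (u a * u b / (u a + t ^ 2 * u b))

lemma congruence_planeFrame {u : ι → K} {t : K} (hab : a ≠ b)
    (hq : u a + t ^ 2 * u b ≠ 0) (d : ι → K) :
    congruence (planeFrame u a b t) (diagonal (planeFrameForm u a b t * d)) =
      ((d a - d b) * (u a * (t * u b) / (u a + t ^ 2 * u b))) • symmSingle K a b +
        diagonal (u * d + ((d a - d b) * (t * u b / (u a + t ^ 2 * u b))) •
          (Pi.single b (t * u b) - Pi.single a (t * u a))) := by
  have hform : planeFrameForm u a b t * d =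
      Function.update (Function.update (u * d) a ((u a + t ^ 2 * u b)⁻¹ * d a)) b
        (u a * u b / (u a + t ^ 2 * u b) * d b) := by
    rw [planeFrameForm]
    ext i
    rcases eq_or_ne i b with rfl | hib
    · simp
    rcases eq_or_ne i a with rfl | hia
    · simp [hib]
    · simp [hia, hib]
  have hdiag (w : ι → K) (c x y : K) : diagonal (w + c • (Pi.single b y - Pi.single a x)) =
      diagonal w + c • (y • single b b 1 - x • single a a 1) := by
    rw [smul_single, smul_single, smul_eq_mul, smul_eq_mul, mul_one, mul_one, ← diagonal_single,
      ← diagonal_single, diagonal_sub, ← diagonal_smul, diagonal_add]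
    rfl
  rw [hform, planeFrame, congruence_updateRow_updateRow hab, vecMulVec_single_add_single,
    vecMulVec_single_add_single, hdiag]
  simp only [Pi.mul_apply]
  match_scalars <;> field_simp <;> ring

end PlaneFrame

lemma exists_ne_zero_add_sq_mul_ne_zero {K : Type*} [Field K] [NeZero (2 : K)] [NeZero (3 : K)]
    {p q : K} (hq : q ≠ 0) :
    ∃ t : K, t ≠ 0 ∧ p + t ^ 2 * q ≠ 0 := by
  by_cases h : p + q = 0
  · refine ⟨2, two_ne_zero, ?_⟩
    have : p + 2 ^ 2 * q = 3 * q := by linear_combination h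
    rw [this]
    exact mul_ne_zero three_ne_zero hq
  · exact ⟨1, one_ne_zero, by simpa using h⟩

section JordanSubalgebra

variable {K ι : Type*} [Field K] [Fintype ι] [DecidableEq ι]

/-- A linear space of symmetric matrices is a Jordan subalgebra with invertible unit `U` if it
contains `U` and is closed under the product `(X U⁻¹ Y + Y U⁻¹ X) / 2`. -/
structure IsJordanSubalgebra_s8 (U : Matrix ι ι K) (J : Submodule K (Matrix ι ι K)) : Prop where
  isUnit_det : IsUnit U.det
  le_symmMatrices : J ≤ symmMatrices K ι
  unit_mem : U ∈ J
  jordan_mul_mem : ∀ X ∈ J, ∀ Y ∈ J, (1 / 2 : K) • (X * U⁻¹ * Y + Y * U⁻¹ * X) ∈ J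

namespace IsJordanSubalgebra_s8

lemma comap_congruence {A U V : Matrix ι ι K} {J : Submodule K (Matrix ι ι K)}
    (hJ : IsJordanSubalgebra_s8 U J) (hA : congruence A V = U) :
    IsJordanSubalgebra_s8 V (J.comap (congruence A)) := by
  obtain ⟨hAdet, hVdet⟩ := isUnit_det_of_congruence (hA ▸ hJ.isUnit_det)
  have hAdet' : IsUnit Aᵀ.det := by rwa [det_transpose]
  have hUinv : A * U⁻¹ * Aᵀ = V⁻¹ := by
    rw [← hA, congruence_apply, Matrix.mul_inv_rev, Matrix.mul_inv_rev, ← Matrix.mul_assoc,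
      mul_nonsing_inv _ hAdet, Matrix.one_mul, Matrix.mul_assoc, nonsing_inv_mul _ hAdet',
      Matrix.mul_one]
  have hmul (X Y : Matrix ι ι K) :
      congruence A X * U⁻¹ * congruence A Y = congruence A (X * V⁻¹ * Y) := by
    simp only [congruence_apply, ← hUinv, Matrix.mul_assoc]
  refine ⟨hVdet, ?_, ?_, fun X hX Y hY => ?_⟩
  · rw [← comap_congruence_symmMatrices hAdet]
    exact Submodule.comap_mono hJ.le_symmMatrices
  · exact Submodule.mem_comap.mpr (hA ▸ hJ.unit_mem)
  · have h := hJ.jordan_mul_mem _ hX _ hY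
    rwa [hmul, hmul, ← map_add, ← map_smul] at h

lemma comap_congruence_ne {A U V : Matrix ι ι K} {J : Submodule K (Matrix ι ι K)}
    (hJ : IsJordanSubalgebra_s8 U J) (hA : congruence A V = U) (hne : J ≠ symmMatrices K ι) :
    J.comap (congruence A) ≠ symmMatrices K ι := by
  have hAdet := (isUnit_det_of_congruence (hA ▸ hJ.isUnit_det)).1
  rw [← comap_congruence_symmMatrices hAdet]
  exact (Submodule.comap_injective_of_surjective (congruence_surjective hAdet)).ne hne

section Unit

variable {u : ι → K} {J : Submodule K (Matrix ι ι K)}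

lemma unit_ne_zero (hJ : IsJordanSubalgebra_s8 (diagonal u) J) (a : ι) : u a ≠ 0 := by
  have h := hJ.isUnit_det.ne_zero
  rw [det_diagonal, Finset.prod_ne_zero_iff] at h
  exact h a (Finset.mem_univ a)

lemma one_mem_diagonalPart (hJ : IsJordanSubalgebra_s8 (diagonal u) J) : 1 ∈ diagonalPart u J := by
  rw [mem_diagonalPart, mul_one]
  exact hJ.unit_mem

lemma exists_mem_diagonalPart_eq_one_eq_zero (hJ : IsJordanSubalgebra_s8 (diagonal u) J) {f : ι → K}
    (hf : f ∈ diagonalPart u J) {a b : ι} (hfab : f a ≠ f b) :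
    ∃ g ∈ diagonalPart u J, g a = 1 ∧ g b = 0 :=
  ⟨(f a - f b)⁻¹ • (f - f b • 1),
    Submodule.smul_mem _ _ (sub_mem hf (Submodule.smul_mem _ _ hJ.one_mem_diagonalPart)),
    by simp [sub_ne_zero.mpr hfab], by simp⟩

lemma inv_diagonal_unit (hJ : IsJordanSubalgebra_s8 (diagonal u) J) :
    (diagonal u)⁻¹ = diagonal u⁻¹ := by
  refine inv_eq_left_inv ?_
  rw [diagonal_mul_diagonal, ← diagonal_one]
  exact congrArg diagonal (funext fun i => inv_mul_cancel₀ (hJ.unit_ne_zero i))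

end Unit

variable [NeZero (2 : K)]

section Products

variable {U : Matrix ι ι K} {J : Submodule K (Matrix ι ι K)}

lemma mul_add_mul_mem (hJ : IsJordanSubalgebra_s8 U J) {X Y : Matrix ι ι K} (hX : X ∈ J)
    (hY : Y ∈ J) : X * U⁻¹ * Y + Y * U⁻¹ * X ∈ J := by
  have h := J.smul_mem (2 : K) (hJ.jordan_mul_mem X hX Y hY)
  rwa [smul_smul, mul_one_div_cancel two_ne_zero, one_smul] at h

lemma triple_product_mem (hJ : IsJordanSubalgebra_s8 U J) {X Y Z : Matrix ι ι K}
    (hX : X ∈ J) (hY : Y ∈ J) (hZ : Z ∈ J) :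
    X * U⁻¹ * Y * U⁻¹ * Z + Z * U⁻¹ * Y * U⁻¹ * X ∈ J := by
  have h := J.sub_mem (J.add_mem
    (hJ.mul_add_mul_mem (hJ.mul_add_mul_mem hX hY) hZ)
    (hJ.mul_add_mul_mem (hJ.mul_add_mul_mem hZ hY) hX))
    (hJ.mul_add_mul_mem (hJ.mul_add_mul_mem hX hZ) hY)
  refine (J.smul_mem_iff (two_ne_zero (α := K))).mp ?_
  convert h using 1
  rw [two_smul]
  noncomm_ring

end Products

section DiagonalUnit

variable {u : ι → K} {J : Submodule K (Matrix ι ι K)}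

lemma diagonal_mul_mul_diagonal_add_mem (hJ : IsJordanSubalgebra_s8 (diagonal u) J)
    {f g : ι → K} {X : Matrix ι ι K} (hf : f ∈ diagonalPart u J) (hg : g ∈ diagonalPart u J)
    (hX : X ∈ J) :
    diagonal f * X * diagonal g + diagonal g * X * diagonal f ∈ J := by
  have hleft (d : ι → K) : diagonal (u * d) * (diagonal u)⁻¹ = diagonal d := by
    rw [hJ.inv_diagonal_unit, mul_comm u d, diagonal_mul_diagonal]
    exact congrArg diagonal (funext fun i => mul_inv_cancel_right₀ (hJ.unit_ne_zero i) _)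
  have hright (d : ι → K) : (diagonal u)⁻¹ * diagonal (u * d) = diagonal d := by
    rw [hJ.inv_diagonal_unit, diagonal_mul_diagonal]
    exact congrArg diagonal (funext fun i => inv_mul_cancel_left₀ (hJ.unit_ne_zero i) _)
  have h := hJ.triple_product_mem (mem_diagonalPart.mp hf) hX (mem_diagonalPart.mp hg)
  rwa [hleft, hleft, Matrix.mul_assoc _ _ (diagonal (u * g)),
    Matrix.mul_assoc _ _ (diagonal (u * f)), hright, hright] at h

lemma mul_mem_diagonalPart (hJ : IsJordanSubalgebra_s8 (diagonal u) J) {f g : ι → K}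
    (hf : f ∈ diagonalPart u J) (hg : g ∈ diagonalPart u J) : f * g ∈ diagonalPart u J := by
  have h := hJ.diagonal_mul_mul_diagonal_add_mem hf hg hJ.unit_mem
  refine (Submodule.smul_mem_iff _ (two_ne_zero (α := K))).mp ?_
  rw [mem_diagonalPart]
  convert h using 1
  simp only [diagonal_mul_diagonal, diagonal_add]
  congr 1
  ext i
  simp only [Pi.mul_apply, Pi.smul_apply, smul_eq_mul]
  ring

lemma double_commutator_mem (hJ : IsJordanSubalgebra_s8 (diagonal u) J) {f : ι → K}
    {X : Matrix ι ι K} (hf : f ∈ diagonalPart u J) (hX : X ∈ J) :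
    of (fun i j => (f i - f j) ^ 2 * X i j) ∈ J := by
  have h := J.sub_mem
    (hJ.diagonal_mul_mul_diagonal_add_mem (hJ.mul_mem_diagonalPart hf hf)
      hJ.one_mem_diagonalPart hX)
    (hJ.diagonal_mul_mul_diagonal_add_mem hf hf hX)
  convert h using 1
  ext i j
  simp only [of_apply, Matrix.sub_apply, Matrix.add_apply, mul_diagonal, diagonal_mul,
    Pi.mul_apply, Pi.one_apply]
  ring

lemma symmSingle_mem_of_smul_add_diagonal_mem (hJ : IsJordanSubalgebra_s8 (diagonal u) J) {f : ι → K}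
    (hf : f ∈ diagonalPart u J) {a b : ι} (hfab : f a ≠ f b) {c : K} (hc : c ≠ 0) {x : ι → K}
    (h : c • symmSingle K a b + diagonal x ∈ J) : symmSingle K a b ∈ J := by
  have h' := hJ.double_commutator_mem hf h
  refine (J.smul_mem_iff (mul_ne_zero (pow_ne_zero 2 (sub_ne_zero.mpr hfab)) hc)).mp ?_
  convert h' using 1
  have hne : a ≠ b := fun h => hfab (congrArg f h)
  ext i j
  by_cases hij : a = i ∧ b = j
  · obtain ⟨rfl, rfl⟩ := hij
    simp [symmSingle, hne, hne.symm]
  by_cases hji : b = i ∧ a = j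
  · obtain ⟨rfl, rfl⟩ := hji
    simp [symmSingle, hne, hne.symm, sub_sq_comm]
  · rcases eq_or_ne i j with rfl | hne_ij
    · simp [symmSingle, single_apply, hij, hji]
    · simp [symmSingle, single_apply, hij, hji, hne_ij]

lemma single_mem_diagonalPart (hJ : IsJordanSubalgebra_s8 (diagonal u) J) {f : ι → K}
    (hf : f ∈ diagonalPart u J) {a b : ι} (hfab : f a ≠ f b) (h : symmSingle K a b ∈ J) :
    Pi.single a 1 ∈ diagonalPart u J := by
  obtain ⟨g, hg, hga, hgb⟩ := hJ.exists_mem_diagonalPart_eq_one_eq_zero hf hfab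
  have hne : a ≠ b := fun h => hfab (congrArg f h)
  have hsquare : symmSingle K a b * (diagonal u)⁻¹ * symmSingle K a b =
      (u b)⁻¹ • single a a 1 + (u a)⁻¹ • single b b 1 := by
    simp [hJ.inv_diagonal_unit, symmSingle, mul_add, add_mul, hne, hne.symm, add_comm]
  have hdiag : diagonal (u * (Pi.single a 1 + Pi.single b 1)) =
      u a • single a a 1 + u b • single b b 1 := by
    rw [mul_add, ← Pi.single_mul_right, ← Pi.single_mul_right, smul_single, smul_single,
      smul_eq_mul, smul_eq_mul, ← diagonal_single, ← diagonal_single, diagonal_add]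
    rfl
  have hadd : Pi.single a 1 + Pi.single b 1 ∈ diagonalPart u J := by
    have hmem := J.smul_mem (u a * u b / 2) (hJ.mul_add_mul_mem h h)
    rw [mem_diagonalPart, hdiag]
    convert hmem using 1
    rw [hsquare]
    have ha := hJ.unit_ne_zero a
    have hb := hJ.unit_ne_zero b
    match_scalars <;> field_simp <;> ring
  have hproj : g * (Pi.single a 1 + Pi.single b 1) = Pi.single a 1 := by
    rw [mul_add, ← Pi.single_mul_right, ← Pi.single_mul_right, hga, hgb]
    simp
  exact hproj ▸ hJ.mul_mem_diagonalPart hg hadd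

lemma eq_symmMatrices_of_separated_symmSingle_mem (hJ : IsJordanSubalgebra_s8 (diagonal u) J)
    (hnonconst : ∃ f ∈ diagonalPart u J, ∃ a b, f a ≠ f b)
    (hmem : ∀ f ∈ diagonalPart u J, ∀ a b, f a ≠ f b → symmSingle K a b ∈ J) :
    J = symmMatrices K ι := by
  have hsingle (a : ι) : Pi.single a 1 ∈ diagonalPart u J := by
    obtain ⟨f, hf, b, c, hbc⟩ := hnonconst
    by_cases hab : f a = f b
    · have hac : f a ≠ f c := hab ▸ hbc
      exact hJ.single_mem_diagonalPart hf hac (hmem f hf a c hac)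
    · exact hJ.single_mem_diagonalPart hf hab (hmem f hf a b hab)
  refine eq_symmMatrices_of_symmSingle_mem hJ.le_symmMatrices fun a b => ?_
  rcases eq_or_ne a b with rfl | hab
  · have h := single_mem_of_mem_diagonalPart (hJ.unit_ne_zero a) (hsingle a)
    exact J.add_mem h h
  · exact hmem _ (hsingle a) a b (by simp [hab.symm])

lemma diagonalPart_planeFrame_lt (hJ : IsJordanSubalgebra_s8 (diagonal u) J) {f : ι → K}
    (hf : f ∈ diagonalPart u J) {a b : ι} (hfab : f a ≠ f b) (hab : symmSingle K a b ∉ J) {t : K}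
    (ht : t ≠ 0) (hq : u a + t ^ 2 * u b ≠ 0) :
    diagonalPart (planeFrameForm u a b t) (J.comap (congruence (planeFrame u a b t))) <
      diagonalPart u J := by
  have hne : a ≠ b := fun h => hfab (congrArg f h)
  have hmem {d : ι → K} (hd : d ∈ diagonalPart (planeFrameForm u a b t)
      (J.comap (congruence (planeFrame u a b t)))) : d a = d b ∧ d ∈ diagonalPart u J := by
    have hd' := Submodule.mem_comap.mp (mem_diagonalPart.mp hd)
    rw [congruence_planeFrame hne hq] at hd'
    have hdab : d a = d b := by
      by_contra hdab
      refine hab (hJ.symmSingle_mem_of_smul_add_diagonal_mem hf hfab ?_ hd')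
      exact mul_ne_zero (sub_ne_zero.mpr hdab)
        (div_ne_zero (mul_ne_zero (hJ.unit_ne_zero a) (mul_ne_zero ht (hJ.unit_ne_zero b))) hq)
    refine ⟨hdab, mem_diagonalPart.mpr ?_⟩
    simpa [hdab] using hd'
  refine SetLike.lt_iff_le_and_exists.mpr ⟨fun d hd => (hmem hd).2, f, hf, fun h => ?_⟩
  exact hfab (hmem h).1

end DiagonalUnit

variable [NeZero (3 : K)]

lemma exists_congruence_diagonalPart_lt {u : ι → K} {J : Submodule K (Matrix ι ι K)}
    (hJ : IsJordanSubalgebra_s8 (diagonal u) J) {f : ι → K}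
    (hf : f ∈ diagonalPart u J) {a b : ι} (hfab : f a ≠ f b) (hab : symmSingle K a b ∉ J) :
    ∃ (A : Matrix ι ι K) (u' : ι → K), congruence A (diagonal u') = diagonal u ∧
      diagonalPart u' (J.comap (congruence A)) < diagonalPart u J := by
  obtain ⟨t, ht, hq⟩ := exists_ne_zero_add_sq_mul_ne_zero (p := u a) (hJ.unit_ne_zero b)
  refine ⟨_, _, ?_, hJ.diagonalPart_planeFrame_lt hf hfab hab ht hq⟩
  simpa using congruence_planeFrame (fun h => hfab (congrArg f h)) hq 1

lemma finrank_add_card_le_of_diagonal {u : ι → K} {J : Submodule K (Matrix ι ι K)}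
    (hJ : IsJordanSubalgebra_s8 (diagonal u) J) (hne : J ≠ symmMatrices K ι) :
    finrank K J + Fintype.card ι ≤ finrank K (symmMatrices K ι) + 1 := by
  induction hm : finrank K (diagonalPart u J) using Nat.strong_induction_on generalizing u J with
  | _ m ih =>
    by_cases hconst : ∀ f ∈ diagonalPart u J, ∀ a b, f a = f b
    · exact finrank_add_card_le_of_diagonalPart_constant hJ.unit_ne_zero hJ.le_symmMatrices hconst
    push Not at hconst
    obtain ⟨f, hf, a, b, hfab, hab⟩ :
        ∃ f ∈ diagonalPart u J, ∃ a b, f a ≠ f b ∧ symmSingle K a b ∉ J := by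
      by_contra! hmem
      exact hne (hJ.eq_symmMatrices_of_separated_symmSingle_mem hconst hmem)
    obtain ⟨A, u', hA, hlt⟩ := hJ.exists_congruence_diagonalPart_lt hf hfab hab
    have hAdet := (isUnit_det_of_congruence (hA ▸ hJ.isUnit_det)).1
    have hle := finrank_le_finrank_comap_congruence hAdet J
    have hbound := ih _ (hm ▸ Submodule.finrank_lt_finrank_of_lt hlt) (hJ.comap_congruence hA)
      (hJ.comap_congruence_ne hA hne) rfl
    omega

end IsJordanSubalgebra_s8

end JordanSubalgebra

theorem stmt8_general {K ι : Type*} [Field K] [NeZero (2 : K)] [NeZero (3 : K)] [Fintype ι]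
    [DecidableEq ι] {U : Matrix ι ι K} {L : Submodule K (Matrix ι ι K)}
    (hL : IsJordanSubalgebra_s8 U L) (hproper : L ≠ symmMatrices K ι) :
    finrank K L ≤ Fintype.card ι * (Fintype.card ι + 1) / 2 - (Fintype.card ι - 1) := by
  obtain ⟨A, u, hA⟩ := exists_congruence_diagonal_eq (hL.le_symmMatrices hL.unit_mem)
  have hAdet := (isUnit_det_of_congruence (hA ▸ hL.isUnit_det)).1
  have hle := finrank_le_finrank_comap_congruence hAdet L
  have hbound := (hL.comap_congruence hA).finrank_add_card_le_of_diagonal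
    (hL.comap_congruence_ne hA hproper)
  have hmono := Submodule.finrank_mono hL.le_symmMatrices
  rw [finrank_symmMatrices] at hbound hmono
  omega

/-- A proper Jordan subalgebra `L` of `(Sⁿ, •_U)` has codimension at least `n - 1`
in `Sⁿ`, i.e. `dim L ≤ n(n+1)/2 - (n-1)`. -/
theorem stmt8 {n : ℕ} (U : Mat n) (hU : IsUnit U.det)
    (L : Submodule ℂ (Mat n)) (hLsub : L ≤ symmSub n)
    (hUL : U ∈ L) (hclosed : ∀ X ∈ L, ∀ Y ∈ L, jmul U X Y ∈ L)
    (hproper : L ≠ symmSub n) :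
    Module.finrank ℂ L ≤ n * (n + 1) / 2 - (n - 1) := by
  simpa using stmt8_general ⟨hU, hLsub, hUL, hclosed⟩ hproper
end
end

section
/- Let L, L′ ⊆ Sⁿ be linear subspaces that are similar, i.e., L′ = P⁻¹ L P for some invertible P ∈ GL(n, ℂ). Then L and L′ are orthogonally congruent: there exists Q ∈ GL(n, ℂ) with Q Qᵀ = 1ₙ and L′ = Q L Qᵀ. -/
open Matrix

noncomputable section

/-!
Over an algebraically closed field of characteristic other than two, an invertible matrix `M` has a
square root which is a polynomial in `M`: a solution `p` of `p² ≡ X` modulo the minimal polynomial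
is built one linear factor at a time, and never gets stuck because `0` is not a root.

Let `P` be invertible, and let `S` be such a square root of `P Pᵀ`. It is symmetric, so
`Q = S⁻¹ P` is orthogonal and `P = S Q` is a polar decomposition. If `A` and `B` are symmetric and
`A P = P B`, transposing shows that `A` commutes with `P Pᵀ`, hence with `S`. Cancelling `S` in
`A S Q = S Q B` leaves `A Q = Q B`, so every symmetric matrix with a symmetric conjugate under `P`
has the same conjugate under the orthogonal matrix `Q`, which depends on `P` alone.
-/

open Polynomial

section SquareRoot

variable {K : Type*} [Field K]

theorem mem_spectrum_of_isRoot_minpoly {R : Type*} [Ring R] [Algebra K R] {x : R} {a : K}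
    (hx : IsIntegral K x) (ha : (minpoly K x).IsRoot a) : a ∈ spectrum K x := by
  obtain ⟨q, hq⟩ := dvd_iff_isRoot.mpr ha
  have hq0 : q ≠ 0 := right_ne_zero_of_mul (hq ▸ minpoly.ne_zero hx)
  have hqm : q.Monic := (monic_X_sub_C a).of_mul_monic_left (hq ▸ minpoly.monic hx)
  have hqx : aeval x q ≠ 0 := minpoly.aeval_ne_zero_of_dvdNotUnit_minpoly hx hqm
    ⟨hq0, X - C a, not_isUnit_X_sub_C a, hq.trans (mul_comm _ _)⟩
  have hmul : (x - algebraMap K R a) * aeval x q = 0 := by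
    simpa only [hq, map_mul, map_sub, aeval_X, aeval_C] using minpoly.aeval K x
  rw [spectrum.mem_iff, IsUnit.sub_iff]
  exact fun hu => hqx (hu.mul_right_eq_zero.mp hmul)

variable [IsAlgClosed K] [NeZero (2 : K)]

theorem exists_quadratic_eq_zero_of_ne_zero_or_ne_zero {a b : K} (c : K) (hab : a ≠ 0 ∨ b ≠ 0) :
    ∃ x, a * (x * x) + b * x + c = 0 := by
  by_cases ha : a = 0
  · have hb : b ≠ 0 := hab.resolve_left (not_not_intro ha)
    exact ⟨-c / b, by rw [ha]; field_simp; ring⟩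
  · exact exists_quadratic_eq_zero ha (IsAlgClosed.exists_eq_mul_self _)

theorem exists_X_sub_C_mul_dvd_sq_sub {f p q : K[X]} {a : K} (hf : f ∣ p ^ 2 - q)
    (ha : q.eval a ≠ 0) : ∃ r : K[X], (X - C a) * f ∣ r ^ 2 - q := by
  obtain ⟨g, hg⟩ := hf
  have heval : p.eval a ^ 2 - q.eval a = f.eval a * g.eval a := by
    simpa only [eval_sub, eval_pow, eval_mul] using congrArg (eval a) hg
  have hcoeff : f.eval a ≠ 0 ∨ 2 * p.eval a ≠ 0 := by
    by_contra! h
    have hp : p.eval a = 0 := (mul_eq_zero.mp h.2).resolve_left two_ne_zero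
    exact ha (by simpa [h.1, hp] using heval)
  -- `(p + c f)² - q = f (g + 2 c p + c² f)`, so `c` has to make the second factor vanish at `a`.
  obtain ⟨c, hc⟩ := exists_quadratic_eq_zero_of_ne_zero_or_ne_zero (g.eval a) hcoeff
  have hroot : X - C a ∣ f * (C c * C c) + 2 * p * C c + g := by
    rw [dvd_iff_isRoot]
    simpa [IsRoot] using hc
  refine ⟨p + C c * f, ?_⟩
  convert mul_dvd_mul_right hroot f using 1
  linear_combination hg

theorem exists_prod_X_sub_C_dvd_sq_sub (s : Multiset K) {q : K[X]}
    (hs : ∀ a ∈ s, q.eval a ≠ 0) :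
    ∃ p : K[X], (s.map fun a => X - C a).prod ∣ p ^ 2 - q := by
  induction s using Multiset.induction_on with
  | empty => exact ⟨0, by simp⟩
  | cons a s ih =>
    obtain ⟨p, hp⟩ := ih fun b hb => hs b (Multiset.mem_cons_of_mem hb)
    simpa only [Multiset.map_cons, Multiset.prod_cons] using
      exists_X_sub_C_mul_dvd_sq_sub hp (hs a (Multiset.mem_cons_self a s))

theorem exists_aeval_sq_eq_of_isUnit {R : Type*} [Ring R] [Algebra K R] {x : R}
    (hx : IsIntegral K x) (hu : IsUnit x) : ∃ p : K[X], aeval x p ^ 2 = x := by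
  have hroots : ∀ a ∈ (minpoly K x).roots, (X : K[X]).eval a ≠ 0 := by
    intro a ha h0
    rw [eval_X] at h0
    subst h0
    exact (spectrum.zero_mem_iff K).mp
      (mem_spectrum_of_isRoot_minpoly hx (isRoot_of_mem_roots ha)) hu
  obtain ⟨p, hp⟩ := exists_prod_X_sub_C_dvd_sq_sub _ hroots
  rw [← (IsAlgClosed.splits _).eq_prod_roots_of_monic (minpoly.monic hx), minpoly.dvd_iff] at hp
  exact ⟨p, by simpa only [map_sub, map_pow, aeval_X, sub_eq_zero] using hp⟩

end SquareRoot

section Symmetric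

variable {n R : Type*} [Fintype n] [CommSemiring R]

theorem isSymm_aeval [DecidableEq n] {A : Matrix n n R} (hA : A.IsSymm) (p : R[X]) :
    (aeval A p).IsSymm := by
  induction p using Polynomial.induction_on' with
  | add p q hp hq => simpa only [map_add] using hp.add hq
  | monomial k a =>
    rw [aeval_monomial, ← Algebra.smul_def]
    exact (hA.pow k).smul a

theorem commute_mul_transpose_of_isSymm {A B P : Matrix n n R} (hA : A.IsSymm) (hB : B.IsSymm)
    (h : A * P = P * B) : Commute A (P * Pᵀ) :=
  calc A * (P * Pᵀ) = P * (B * Pᵀ) := by rw [← Matrix.mul_assoc, h, Matrix.mul_assoc]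
    _ = P * (P * B)ᵀ := by rw [Matrix.transpose_mul, hB.eq]
    _ = P * Pᵀ * A := by rw [← h, Matrix.transpose_mul, hA.eq, Matrix.mul_assoc]

end Symmetric

section OrthogonalConjugation

variable {n K : Type*} [Fintype n] [DecidableEq n] [Field K] [IsAlgClosed K] [NeZero (2 : K)]

theorem exists_eq_aeval_mul_orthogonal {P : Matrix n n K} (hP : IsUnit P) :
    ∃ (p : K[X]) (Q : Matrix n n K), Q * Qᵀ = 1 ∧ P = aeval (P * Pᵀ) p * Q := by
  have hPPt : IsUnit (P * Pᵀ) := hP.mul ((Matrix.isUnit_transpose P).mpr hP)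
  obtain ⟨p, hp⟩ := exists_aeval_sq_eq_of_isUnit (Matrix.isIntegral (R := K) (P * Pᵀ)) hPPt
  set S := aeval (P * Pᵀ) p
  have hS : IsUnit S.det :=
    (Matrix.isUnit_iff_isUnit_det S).mp ((isUnit_pow_iff two_ne_zero).mp (hp ▸ hPPt))
  have hSt : Sᵀ = S := isSymm_aeval (Matrix.isSymm_mul_transpose_self P) p
  refine ⟨p, S⁻¹ * P, ?_, (Matrix.mul_nonsing_inv_cancel_left S P hS).symm⟩
  calc S⁻¹ * P * (S⁻¹ * P)ᵀ = S⁻¹ * (P * Pᵀ) * S⁻¹ := by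
        rw [Matrix.transpose_mul, Matrix.transpose_nonsing_inv, hSt]
        simp only [Matrix.mul_assoc]
    _ = S⁻¹ * S * (S * S⁻¹) := by rw [← hp, sq]; simp only [Matrix.mul_assoc]
    _ = 1 := by rw [Matrix.nonsing_inv_mul S hS, Matrix.mul_nonsing_inv S hS, one_mul]

theorem exists_orthogonal_forall_mul_eq_mul {P : Matrix n n K} (hP : IsUnit P) :
    ∃ Q : Matrix n n K, Q * Qᵀ = 1 ∧ ∀ A B : Matrix n n K, A.IsSymm → B.IsSymm →
      A * P = P * B → A * Q = Q * B := by
  obtain ⟨p, Q, hQ, hPQ⟩ := exists_eq_aeval_mul_orthogonal hP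
  refine ⟨Q, hQ, fun A B hA hB hAB => ?_⟩
  have hcomm : Commute A (aeval (P * Pᵀ) p) :=
    Algebra.commute_of_mem_adjoin_singleton_of_commute (aeval_mem_adjoin_singleton K _)
      (commute_mul_transpose_of_isSymm hA hB hAB)
  generalize aeval (P * Pᵀ) p = S at hPQ hcomm
  have hS : IsUnit S := isUnit_of_mul_isUnit_left (hPQ ▸ hP)
  apply hS.mul_left_cancel
  calc S * (A * Q) = A * (S * Q) := by rw [← mul_assoc, ← hcomm.eq, mul_assoc]
    _ = S * (Q * B) := by rw [← hPQ, hAB, hPQ, mul_assoc]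

theorem stmt10_general (L L' : Set (Matrix n n K)) (hL : ∀ A ∈ L, A.IsSymm)
    (hL' : ∀ B ∈ L', B.IsSymm) (P : Matrix n n K) (hP : IsUnit P.det)
    (hsim : L' = (fun A => P⁻¹ * A * P) '' L) :
    ∃ Q : Matrix n n K, Q * Qᵀ = 1 ∧ L' = (fun A => Q * A * Qᵀ) '' L := by
  obtain ⟨Q, hQ, hconj⟩ :=
    exists_orthogonal_forall_mul_eq_mul ((Matrix.isUnit_iff_isUnit_det P).mpr hP)
  have hQ' : Qᵀ * Q = 1 := mul_eq_one_comm.mp hQ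
  refine ⟨Qᵀ, by rwa [Matrix.transpose_transpose], hsim.trans (Set.image_congr fun A hA => ?_)⟩
  have hB : (P⁻¹ * A * P).IsSymm := hL' _ (hsim ▸ Set.mem_image_of_mem _ hA)
  have hAP : A * P = P * (P⁻¹ * A * P) := by
    rw [Matrix.mul_assoc P⁻¹, Matrix.mul_nonsing_inv_cancel_left P _ hP]
  calc P⁻¹ * A * P = Qᵀ * (Q * (P⁻¹ * A * P)) := by rw [← mul_assoc, hQ', one_mul]
    _ = Qᵀ * A * Qᵀᵀ := by
      rw [← hconj A _ (hL A hA) hB hAP, Matrix.transpose_transpose, mul_assoc]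

end OrthogonalConjugation

/-- If two linear subspaces `L, L′` of symmetric matrices are similar
(`L′ = P⁻¹ L P`), then they are orthogonally congruent: `L′ = Q L Qᵀ` for a
complex orthogonal matrix `Q`. -/
theorem stmt10 {n : ℕ} (L L' : Submodule ℂ (Mat n))
    (hsym : ∀ X ∈ L, Matrix.IsSymm X) (hsym' : ∀ X ∈ L', Matrix.IsSymm X)
    (P : Mat n) (hP : IsUnit P.det)
    (hsim : (L' : Set (Mat n)) = (fun A => P⁻¹ * A * P) '' (L : Set (Mat n))) :
    ∃ Q : Mat n, Q * Qᵀ = 1 ∧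
      (L' : Set (Mat n)) = (fun A => Q * A * Qᵀ) '' (L : Set (Mat n)) :=
  stmt10_general (L : Set (Mat n)) L' hsym hsym' P hP hsim
end
end
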